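/- Let α, β be nonzero real numbers, 0 < s < 1 and C ≥ 1. There exist constants ε = ε(s) > 0, δ₀ = δ₀(α, β, s, C) > 0, K = K(α, β, s) > 0 and an exponent e = e(s) > 0 such that the following holds for all 0 < δ ≤ δ₀. Let A ⊂ [0,1] be any δ-separated set of cardinality ⌈δ^{-s}⌉ such that #(A ∩ I) ≤ C·l^s·(#A) for every interval I of length l ≥ δ. Then for every G ⊆ A × A with #G ≥ δ^{ε}(#A)², one has E_δ(A +_G A) + E_δ({αx² + βy² : (x,y) ∈ G}) ≥ K·C^{-e}·δ^{-ε}·(#A). -/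

import Mathlib

open MeasureTheory Real
open scoped Classical

/-- `E_δ(A)`: the δ-covering number of `A ⊆ ℝ`, the minimal number of sets of
diameter at most `δ` needed to cover `A`. -/
noncomputable def coverNum (δ : ℝ) (A : Set ℝ) : ℕ :=
  sInf {m : ℕ | ∃ F : Finset (Set ℝ), F.card = m ∧
    (∀ U ∈ F, EMetric.diam U ≤ ENNReal.ofReal δ) ∧ A ⊆ ⋃ U ∈ F, U}

/-!
Suppose both covering numbers are `≪ L * #A` with `L = δ ^ (-ε)`. Rounding to the `δ`-grid and
applying the Balog–Szemerédi–Gowers theorem gives a large `A' ⊆ A` for which both `A'` and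
`{x² / 2 : x ∈ A'}` have small difference sets at scale `δ`. Since
`(u² - v²) / 2 = (u - v) * (u + v) / 2`, fixing a popular difference turns differences of squares
into the points of a dilate of `A'`, and Ruzsa's triangle inequality then controls the sets
`T A' - T' A'` for all `T, T'` in `A' - A' + A' - A'`. Hence the set of quotients
`(x - y) / (z - w)` is nearly closed under `ξ ↦ ξ / 2` and `ξ ↦ (ξ + 1) / 2`, so it is dense in
`[0, 1]` at a scale slightly above `δ`. Each slope near such a quotient is realised as
`(a - c) / (b - d)` by many quadruples in `A'`, and double counting, with non-concentration taking
care of small `b - d`, shows that there are not enough quadruples for all slopes.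
-/

open scoped Pointwise

section Discretisation

variable {ι κ β : Type*} {δ : ℝ}

/-- The `δ`-grid cells met by the image of `S` under `f`; the cell `[kδ, (k + 1)δ)` is encoded by
the integer `k`, so that sums and differences of cells can be formed in `ℤ`. -/
noncomputable def cells (δ : ℝ) (f : ι → ℝ) (S : Finset ι) : Finset ℤ :=
  S.image fun i => ⌊f i / δ⌋

lemma floor_mem_cells {f : ι → ℝ} {S : Finset ι} {i : ι} (hi : i ∈ S) :
    ⌊f i / δ⌋ ∈ cells δ f S :=
  Finset.mem_image_of_mem _ hi

lemma cells_subset_cells {f : ι → ℝ} {S T : Finset ι} (h : S ⊆ T) : cells δ f S ⊆ cells δ f T :=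
  Finset.image_subset_image h

lemma cells_nonempty {f : ι → ℝ} {S : Finset ι} (h : S.Nonempty) : (cells δ f S).Nonempty :=
  h.image _

lemma image_sub_image_eq_image_product {Γ : Type*} [Sub Γ] [DecidableEq Γ] (S : Finset ι)
    (T : Finset κ) (f : ι → Γ) (g : κ → Γ) :
    S.image f - T.image g = (S ×ˢ T).image fun p => f p.1 - g p.2 := by
  rw [← Finset.image_sub_product, ← Finset.prodMap_image_product, Finset.image_image]
  rfl

lemma image_add_image_eq_image_product {Γ : Type*} [Add Γ] [DecidableEq Γ] (S : Finset ι)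
    (T : Finset κ) (f : ι → Γ) (g : κ → Γ) :
    S.image f + T.image g = (S ×ˢ T).image fun p => f p.1 + g p.2 := by
  rw [← Finset.image_add_product, ← Finset.prodMap_image_product, Finset.image_image]
  rfl

lemma card_le_mul_card_image_of_fibre_le [DecidableEq β] {S : Finset ι} {f : ι → β} {c : ℝ}
    (h : ∀ i ∈ S, ((S.filter fun j => f j = f i).card : ℝ) ≤ c) :
    (S.card : ℝ) ≤ c * (S.image f).card := by
  rw [Finset.card_eq_sum_card_image f S, Nat.cast_sum, mul_comm, ← nsmul_eq_mul]
  refine Finset.sum_le_card_nsmul _ _ _ fun b hb => ?_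
  obtain ⟨i, hi, rfl⟩ := Finset.mem_image.1 hb
  exact h i hi

lemma card_lt_of_forall_abs_sub_lt {Z : Finset ℤ} (hZ : Z.Nonempty) {c : ℝ}
    (h : ∀ x ∈ Z, ∀ y ∈ Z, |(x : ℝ) - y| < c) : (Z.card : ℝ) < c + 1 := by
  have hsub : Z ⊆ Finset.Icc (Z.min' hZ) (Z.max' hZ) := fun z hz =>
    Finset.mem_Icc.2 ⟨Z.min'_le z hz, Z.le_max' z hz⟩
  have hcard := Finset.card_le_card hsub
  rw [Int.card_Icc, Int.le_toNat (by linarith [Z.min'_le_max' hZ])] at hcard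
  have hdiam := (le_abs_self _).trans_lt (h _ (Z.max'_mem hZ) _ (Z.min'_mem hZ))
  have : (Z.card : ℝ) ≤ Z.max' hZ + 1 - Z.min' hZ := by exact_mod_cast hcard
  linarith

lemma card_image_le_mul_card_image [DecidableEq β] {S : Finset ι} {f : ι → β} {g : ι → ℤ} {c : ℝ}
    (h : ∀ i ∈ S, ∀ j ∈ S, f i = f j → |(g i : ℝ) - g j| < c) :
    ((S.image g).card : ℝ) ≤ (c + 1) * (S.image f).card := by
  set T : Finset (β × ℤ) := S.image fun i => (f i, g i) with hT
  have hg : T.image Prod.snd = S.image g := by rw [hT, Finset.image_image]; rfl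
  have hf : T.image Prod.fst = S.image f := by rw [hT, Finset.image_image]; rfl
  rw [← hf, ← hg]
  refine (Nat.cast_le.2 Finset.card_image_le).trans
    (card_le_mul_card_image_of_fibre_le fun p hp => ?_)
  set F : Finset (β × ℤ) := T.filter fun q => q.1 = p.1 with hF
  have hinj : Set.InjOn Prod.snd (F : Set (β × ℤ)) := fun q hq q' hq' hqq' =>
    Prod.ext ((Finset.mem_filter.1 hq).2.trans (Finset.mem_filter.1 hq').2.symm) hqq'
  have hpF : p ∈ F := Finset.mem_filter.2 ⟨hp, rfl⟩
  rw [← Finset.card_image_of_injOn hinj]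
  refine (card_lt_of_forall_abs_sub_lt ⟨_, Finset.mem_image_of_mem _ hpF⟩ ?_).le
  simp only [hF, hT, Finset.mem_image, Finset.mem_filter]
  rintro _ ⟨_, ⟨⟨i, hi, rfl⟩, hip⟩, rfl⟩ _ ⟨_, ⟨⟨j, hj, rfl⟩, hjp⟩, rfl⟩
  exact h i hi j hj (hip.trans hjp.symm)

lemma abs_floor_sub_floor_lt (x y : ℝ) : |(⌊x⌋ : ℝ) - ⌊y⌋| < |x - y| + 1 := by
  have hx := Int.floor_le x
  have hx' := Int.lt_floor_add_one x
  have hy := Int.floor_le y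
  have hy' := Int.lt_floor_add_one y
  rw [abs_lt]
  constructor <;> linarith [le_abs_self (x - y), neg_abs_le (x - y)]

lemma abs_sub_lt_of_floor_div_eq (hδ : 0 < δ) {x y : ℝ} (h : ⌊x / δ⌋ = ⌊y / δ⌋) :
    |x - y| < δ := by
  have := Int.abs_sub_lt_one_of_floor_eq_floor h
  rwa [← sub_div, abs_div, abs_of_pos hδ, div_lt_one hδ] at this

lemma abs_floor_sub_sub_floor_sub_lt (x y z w : ℝ) :
    |((⌊x⌋ - ⌊y⌋ : ℤ) : ℝ) - (⌊z⌋ - ⌊w⌋ : ℤ)| < |x - y - (z - w)| + 2 := by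
  push_cast
  have hx := Int.floor_le x
  have hx' := Int.lt_floor_add_one x
  have hy := Int.floor_le y
  have hy' := Int.lt_floor_add_one y
  have hz := Int.floor_le z
  have hz' := Int.lt_floor_add_one z
  have hw := Int.floor_le w
  have hw' := Int.lt_floor_add_one w
  rw [abs_lt]
  constructor <;> linarith [le_abs_self (x - y - (z - w)), neg_abs_le (x - y - (z - w))]

lemma abs_sub_sub_sub_lt_of_floor_div_sub_eq (hδ : 0 < δ) {x y z w : ℝ}
    (h : ⌊x / δ⌋ - ⌊y / δ⌋ = ⌊z / δ⌋ - ⌊w / δ⌋) : |x - y - (z - w)| < 2 * δ := by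
  have hcast : (⌊x / δ⌋ : ℝ) - ⌊y / δ⌋ = ⌊z / δ⌋ - ⌊w / δ⌋ := by exact_mod_cast h
  have hscaled : |(x - y - (z - w)) / δ| < 2 := by
    rw [sub_div, sub_div, sub_div, abs_lt]
    constructor <;>
      linarith [Int.floor_le (x / δ), Int.lt_floor_add_one (x / δ), Int.floor_le (y / δ),
        Int.lt_floor_add_one (y / δ), Int.floor_le (z / δ), Int.lt_floor_add_one (z / δ),
        Int.floor_le (w / δ), Int.lt_floor_add_one (w / δ)]
  rwa [abs_div, abs_of_pos hδ, div_lt_iff₀ hδ] at hscaled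

lemma card_cells_le_two_mul_coverNum (hδ : 0 < δ) (f : ι → ℝ) (S : Finset ι) :
    (cells δ f S).card ≤ 2 * coverNum δ (f '' S) := by
  obtain ⟨F, hcard, hdiam, hcover⟩ : coverNum δ (f '' S) ∈ _ := Nat.sInf_mem
    ⟨_, S.image fun i => {f i}, rfl, by simp [EMetric.diam], fun x => by
      rintro ⟨i, hi, rfl⟩
      exact Set.mem_biUnion (Finset.mem_image_of_mem (fun i => ({f i} : Set ℝ)) hi) rfl⟩
  have hsub : cells δ f S ⊆ F.biUnion fun U => cells δ f (S.filter fun i => f i ∈ U) := by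
    intro z hz
    obtain ⟨i, hi, rfl⟩ := Finset.mem_image.1 hz
    obtain ⟨U, hU, hiU⟩ := Set.mem_iUnion₂.1 (hcover ⟨i, hi, rfl⟩)
    exact Finset.mem_biUnion.2 ⟨U, hU, floor_mem_cells (Finset.mem_filter.2 ⟨hi, hiU⟩)⟩
  rw [← hcard, mul_comm]
  refine (Finset.card_le_card hsub).trans (Finset.card_biUnion_le_card_mul _ _ _ fun U hU => ?_)
  rcases (cells δ f (S.filter fun i => f i ∈ U)).eq_empty_or_nonempty with h | h
  · simp [h]
  have hlt := card_lt_of_forall_abs_sub_lt h (c := 2) fun x hx y hy => by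
    obtain ⟨i, hi, rfl⟩ := Finset.mem_image.1 hx
    obtain ⟨j, hj, rfl⟩ := Finset.mem_image.1 hy
    have hij : dist (f i) (f j) ≤ δ := by
      rw [← ENNReal.ofReal_le_ofReal_iff hδ.le, ← edist_dist]
      exact (Metric.edist_le_ediam_of_mem (Finset.mem_filter.1 hi).2
        (Finset.mem_filter.1 hj).2).trans (hdiam U hU)
    have hscaled : |f i / δ - f j / δ| ≤ 1 := by
      rwa [← sub_div, abs_div, abs_of_pos hδ, div_le_one hδ]
    linarith [abs_floor_sub_floor_lt (f i / δ) (f j / δ)]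
  have : (cells δ f (S.filter fun i => f i ∈ U)).card < 3 := by
    rw [← Nat.cast_lt (α := ℝ)]
    norm_num at hlt ⊢
    exact hlt
  omega

lemma card_image_floor_add_floor_le_coverNum (hδ : 0 < δ) (f g : ι → ℝ) (S : Finset ι) :
    ((S.image fun i => ⌊f i / δ⌋ + ⌊g i / δ⌋).card : ℝ) ≤
      8 * coverNum δ ((fun i => f i + g i) '' S) := by
  have hcells : ((cells δ (fun i => f i + g i) S).card : ℝ) ≤
      2 * coverNum δ ((fun i => f i + g i) '' S) := by
    exact_mod_cast card_cells_le_two_mul_coverNum hδ _ S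
  have := card_image_le_mul_card_image (S := S) (f := fun i => ⌊(f i + g i) / δ⌋)
    (g := fun i => ⌊f i / δ⌋ + ⌊g i / δ⌋) (c := 3) fun i _ j _ hij => by
      have hsum := Int.abs_sub_lt_one_of_floor_eq_floor hij
      rw [add_div, add_div, abs_lt] at hsum
      push_cast
      rw [abs_lt]
      constructor <;>
        linarith [Int.floor_le (f i / δ), Int.lt_floor_add_one (f i / δ), Int.floor_le (g i / δ),
          Int.lt_floor_add_one (g i / δ), Int.floor_le (f j / δ), Int.lt_floor_add_one (f j / δ),
          Int.floor_le (g j / δ), Int.lt_floor_add_one (g j / δ)]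
  rw [← cells] at this
  linarith

/-- Rescaling by `c` stretches a coincidence of differences, which is known up to `2δ`, to `2|c|δ`,
and passing to cells costs another `2δ`. -/
lemma card_cells_mul_sub_cells_mul_le (hδ : 0 < δ) (c : ℝ) (f : ι → ℝ) (g : κ → ℝ) (S : Finset ι)
    (T : Finset κ) :
    ((cells δ (fun i => c * f i) S - cells δ (fun i => c * g i) T).card : ℝ) ≤
      (2 * |c| + 3) * (cells δ f S - cells δ g T).card := by
  simp only [cells, image_sub_image_eq_image_product]
  refine (card_image_le_mul_card_image (c := 2 * |c| + 2) fun p _ q _ hpq => ?_).trans_eq (by ring)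
  have hδ2 := abs_sub_sub_sub_lt_of_floor_div_sub_eq hδ hpq
  refine (abs_floor_sub_sub_floor_sub_lt _ _ _ _).trans_le ?_
  have : |c * f p.1 / δ - c * g p.2 / δ - (c * f q.1 / δ - c * g q.2 / δ)| ≤ 2 * |c| := by
    rw [show c * f p.1 / δ - c * g p.2 / δ - (c * f q.1 / δ - c * g q.2 / δ) =
      c * (f p.1 - g p.2 - (f q.1 - g q.2)) / δ by ring, abs_div, abs_mul, abs_of_pos hδ,
      div_le_iff₀ hδ]
    nlinarith [abs_nonneg c]
  linarith

lemma card_le_mul_card_image_of_separated [DecidableEq β] (hδ : 0 < δ) {A : Finset ℝ}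
    (hsep : (A : Set ℝ).Pairwise fun x y => δ ≤ |x - y|) {f : ℝ → β} {r : ℝ}
    (h : ∀ x ∈ A, ∀ y ∈ A, f x = f y → |x - y| < r * δ) :
    (A.card : ℝ) ≤ (r + 2) * (A.image f).card := by
  have hinj : Set.InjOn (fun x => ⌊x / δ⌋) (A : Set ℝ) := fun x hx y hy hxy => by
    by_contra hne
    exact (hsep hx hy hne).not_gt (abs_sub_lt_of_floor_div_eq hδ hxy)
  rw [← Finset.card_image_of_injOn hinj]
  refine (card_image_le_mul_card_image (c := r + 1) fun x hx y hy hxy => ?_).trans_eq (by ring)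
  have hscaled : |x / δ - y / δ| < r := by
    rw [← sub_div, abs_div, abs_of_pos hδ, div_lt_iff₀ hδ]
    exact h x hx y hy hxy
  linarith [abs_floor_sub_floor_lt (x / δ) (y / δ)]

lemma card_fibre_le_of_separated [DecidableEq β] (hδ : 0 < δ) {A : Finset ℝ}
    (hsep : (A : Set ℝ).Pairwise fun x y => δ ≤ |x - y|) {f : ℝ → β} {r : ℝ} (hr : 0 ≤ r)
    (h : ∀ x ∈ A, ∀ y ∈ A, f x = f y → |x - y| < r * δ) (b : β) :
    ((A.filter fun x => f x = b).card : ℝ) ≤ r + 2 := by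
  have hfib := card_le_mul_card_image_of_separated hδ (A := A.filter fun x => f x = b)
    (hsep.mono (Finset.coe_subset.2 (Finset.filter_subset _ _))) (f := f) (r := r)
    fun x hx y hy => h x (Finset.mem_of_mem_filter x hx) y (Finset.mem_of_mem_filter y hy)
  have himage : ((A.filter fun x => f x = b).image f).card ≤ 1 :=
    Finset.card_le_one.2 fun x hx y hy => by
      obtain ⟨i, hi, rfl⟩ := Finset.mem_image.1 hx
      obtain ⟨j, hj, rfl⟩ := Finset.mem_image.1 hy
      rw [(Finset.mem_filter.1 hi).2, (Finset.mem_filter.1 hj).2]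
  have : (((A.filter fun x => f x = b).image f).card : ℝ) ≤ 1 := by exact_mod_cast himage
  nlinarith

end Discretisation

section BalogSzemerediGowers

variable {α β : Type*} {G : Finset (α × β)} {A : Finset α} {B : Finset β} {K : ℝ}

/-- The common neighbours in `B` of two left vertices of the bipartite graph `G`. -/
noncomputable def commonNbrs (G : Finset (α × β)) (B : Finset β) (x z : α) : Finset β :=
  B.filter fun y => (x, y) ∈ G ∧ (z, y) ∈ G

/-- The paths `x, b, z, b', x'` of length four from `x` to `x'` in the bipartite graph `G`, each
recorded as `(z, b, b')`. -/
noncomputable def fourPaths (G : Finset (α × β)) (A : Finset α) (B : Finset β) (x x' : α) :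
    Finset (α × β × β) :=
  (A ×ˢ B ×ˢ B).filter fun p =>
    p.2.1 ∈ commonNbrs G B x p.1 ∧ p.2.2 ∈ commonNbrs G B x' p.1

lemma sum_card_left_nbrs (hG : G ⊆ A ×ˢ B) :
    ∑ y ∈ B, (A.filter fun x => (x, y) ∈ G).card = G.card := by
  have hmaps : Set.MapsTo Prod.snd (G : Set (α × β)) B := fun p hp =>
    (Finset.mem_product.1 (hG hp)).2
  rw [Finset.card_eq_sum_card_fiberwise hmaps]
  refine Finset.sum_congr rfl fun y _ => ?_
  refine Finset.card_nbij' (fun x => (x, y)) Prod.fst ?_ ?_ (fun _ _ => rfl) ?_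
  · intro x hx
    exact Finset.mem_filter.2 ⟨(Finset.mem_filter.1 hx).2, rfl⟩
  · rintro ⟨x, y'⟩ hp
    obtain ⟨hpG, rfl⟩ := Finset.mem_filter.1 hp
    exact Finset.mem_filter.2 ⟨(Finset.mem_product.1 (hG hpG)).1, hpG⟩
  · rintro ⟨x, y'⟩ hp
    exact Prod.ext rfl (Finset.mem_filter.1 hp).2.symm

lemma sum_card_pairs_left_nbrs (p : α × α → Prop) :
    ∑ y ∈ B, (((A.filter fun x => (x, y) ∈ G) ×ˢ (A.filter fun x => (x, y) ∈ G)).filter p).card =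
      ∑ e ∈ (A ×ˢ A).filter p, (commonNbrs G B e.1 e.2).card := by
  have := Finset.sum_card_bipartiteAbove_eq_sum_card_bipartiteBelow
    (s := (A ×ˢ A).filter p) (t := B) fun e y => (e.1, y) ∈ G ∧ (e.2, y) ∈ G
  refine Eq.trans (Finset.sum_congr rfl fun y _ => ?_) this.symm
  congr 1
  ext e
  simp only [Finset.bipartiteBelow, Finset.mem_filter, Finset.mem_product]
  tauto

/-- Average over the neighbourhoods of right vertices: by Cauchy–Schwarz they contain many pairs,
whereas a pair with few common neighbours lies in few of them. -/
lemma exists_subset_few_pairs_few_commonNbrs (hK : 0 < K) (hB : B.Nonempty) (hG : G ⊆ A ×ˢ B)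
    (hdense : (A.card * B.card : ℝ) ≤ K * G.card) :
    ∃ S ⊆ A, (A.card : ℝ) ≤ 2 * K * S.card ∧
      8 * (((S ×ˢ S).filter fun e =>
        16 * K ^ 2 * (commonNbrs G B e.1 e.2).card < B.card).card : ℝ) ≤ (S.card : ℝ) ^ 2 := by
  set N : β → Finset α := fun y => A.filter fun x => (x, y) ∈ G with hN
  set bad : α × α → Prop := fun e => 16 * K ^ 2 * ((commonNbrs G B e.1 e.2).card : ℝ) < B.card
    with hbad
  suffices ∃ y ∈ B, (A.card : ℝ) ^ 2 ≤
      2 * K ^ 2 * ((N y).card ^ 2 - 8 * ((N y ×ˢ N y).filter bad).card) by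
    obtain ⟨y, -, hy⟩ := this
    refine ⟨N y, Finset.filter_subset _ _, ?_, ?_⟩
    · refine le_of_sq_le_sq ?_ (by positivity)
      have : (0 : ℝ) ≤ K ^ 2 * ((N y ×ˢ N y).filter bad).card := by positivity
      nlinarith [sq_nonneg (K * (N y).card)]
    · have := nonneg_of_mul_nonneg_right ((sq_nonneg _).trans hy) (by positivity)
      linarith
  have hedges : ∑ y ∈ B, ((N y).card : ℝ) = G.card := by
    exact_mod_cast sum_card_left_nbrs hG
  have hcauchy : (G.card : ℝ) ^ 2 ≤ B.card * ∑ y ∈ B, ((N y).card : ℝ) ^ 2 :=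
    hedges ▸ sq_sum_le_card_mul_sum_sq
  have hbadsum : 16 * K ^ 2 * ∑ y ∈ B, (((N y ×ˢ N y).filter bad).card : ℝ) ≤
      A.card ^ 2 * B.card := by
    have hcount : ∑ y ∈ B, (((N y ×ˢ N y).filter bad).card : ℝ) =
        ∑ e ∈ (A ×ˢ A).filter bad, ((commonNbrs G B e.1 e.2).card : ℝ) := by
      exact_mod_cast sum_card_pairs_left_nbrs (A := A) (B := B) (G := G) bad
    rw [hcount, Finset.mul_sum]
    calc ∑ e ∈ (A ×ˢ A).filter bad, 16 * K ^ 2 * ((commonNbrs G B e.1 e.2).card : ℝ)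
        ≤ ((A ×ˢ A).filter bad).card • (B.card : ℝ) :=
          Finset.sum_le_card_nsmul _ _ _ fun e he => (Finset.mem_filter.1 he).2.le
      _ ≤ A.card ^ 2 * B.card := by
          rw [nsmul_eq_mul]
          gcongr
          exact_mod_cast (Finset.card_filter_le _ _).trans_eq (by rw [Finset.card_product, sq])
  refine Finset.exists_le_of_sum_le hB ?_
  rw [Finset.sum_const, nsmul_eq_mul, ← Finset.mul_sum, Finset.sum_sub_distrib, ← Finset.mul_sum]
  have hB0 : (0 : ℝ) < B.card := by exact_mod_cast hB.card_pos
  have hsq : (A.card * B.card : ℝ) ^ 2 ≤ (K * G.card) ^ 2 := by gcongr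
  have hpairs : (A.card : ℝ) ^ 2 * B.card ≤ K ^ 2 * ∑ y ∈ B, ((N y).card : ℝ) ^ 2 := by
    refine le_of_mul_le_mul_right ?_ hB0
    nlinarith [mul_le_mul_of_nonneg_left hcauchy (sq_nonneg K)]
  nlinarith

lemma exists_subset_common_good {S : Finset α} {good : α → α → Prop}
    (hbad : 8 * ((S ×ˢ S).filter fun e => ¬good e.1 e.2).card ≤ S.card ^ 2) :
    ∃ T ⊆ S, S.card ≤ 2 * T.card ∧
      ∀ x ∈ T, ∀ y ∈ T, S.card ≤ 2 * (S.filter fun z => good x z ∧ good y z).card := by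
  set b : α → ℕ := fun x => (S.filter fun z => ¬good x z).card with hb
  refine ⟨S.filter fun x => 4 * b x ≤ S.card, Finset.filter_subset _ _, ?_, fun x hx y hy => ?_⟩
  · have hsum : ∑ x ∈ S, b x = ((S ×ˢ S).filter fun e => ¬good e.1 e.2).card := by
      simp only [hb, Finset.card_filter, Finset.sum_product]
    have hmany : (S.filter fun x => ¬4 * b x ≤ S.card).card * S.card ≤ 4 * ∑ x ∈ S, b x := by
      rw [Finset.mul_sum, ← smul_eq_mul]
      refine (Finset.card_nsmul_le_sum _ _ _ fun x hx => ?_).trans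
        (Finset.sum_le_sum_of_subset (Finset.filter_subset _ _))
      exact (not_le.1 (Finset.mem_filter.1 hx).2).le
    have hsplit := Finset.card_filter_add_card_filter_not (s := S) fun x => 4 * b x ≤ S.card
    nlinarith
  · have hcover : S ⊆ (S.filter fun z => good x z ∧ good y z) ∪
        ((S.filter fun z => ¬good x z) ∪ (S.filter fun z => ¬good y z)) := fun z hz => by
      simp only [Finset.mem_union, Finset.mem_filter]
      tauto
    have := (Finset.card_le_card hcover).trans ((Finset.card_union_le _ _).trans
      (Nat.add_le_add_left (Finset.card_union_le _ _) _))
    have hx' := (Finset.mem_filter.1 hx).2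
    have hy' := (Finset.mem_filter.1 hy).2
    simp only [hb] at hx' hy'
    omega

lemma card_fourPaths (x x' : α) :
    (fourPaths G A B x x').card =
      ∑ z ∈ A, (commonNbrs G B x z).card * (commonNbrs G B x' z).card := by
  rw [fourPaths, Finset.card_filter, Finset.sum_product]
  refine Finset.sum_congr rfl fun z _ => ?_
  rw [← Finset.card_filter, ← Finset.card_product]
  congr 1
  ext p
  simp only [commonNbrs, Finset.mem_filter, Finset.mem_product]
  tauto

theorem exists_subset_many_fourPaths (hK : 0 < K) (hB : B.Nonempty) (hG : G ⊆ A ×ˢ B)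
    (hdense : (A.card * B.card : ℝ) ≤ K * G.card) :
    ∃ A' ⊆ A, (A.card : ℝ) ≤ 4 * K * A'.card ∧ ∀ x ∈ A', ∀ x' ∈ A',
      (A.card * B.card ^ 2 : ℝ) ≤ 1024 * K ^ 5 * (fourPaths G A B x x').card := by
  obtain ⟨S, hSA, hS, hbad⟩ := exists_subset_few_pairs_few_commonNbrs hK hB hG hdense
  set good : α → α → Prop := fun x z =>
    (B.card : ℝ) ≤ 16 * K ^ 2 * (commonNbrs G B x z).card with hgood
  obtain ⟨T, hTS, hT, hcommon⟩ := exists_subset_common_good (S := S) (good := good)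
    (by simp only [hgood, not_le]; exact_mod_cast hbad)
  have hT' : (S.card : ℝ) ≤ 2 * T.card := by exact_mod_cast hT
  refine ⟨T, hTS.trans hSA, by nlinarith, fun x hx x' hx' => ?_⟩
  set Z := S.filter fun z => good x z ∧ good x' z with hZ
  have hZcard : (S.card : ℝ) ≤ 2 * Z.card := by exact_mod_cast hcommon x hx x' hx'
  have hpaths : (Z.card : ℝ) * B.card ^ 2 ≤
      256 * K ^ 4 * (fourPaths G A B x x').card := by
    rw [card_fourPaths, Nat.cast_sum, Finset.mul_sum, ← nsmul_eq_mul]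
    refine (Finset.card_nsmul_le_sum _ _ _ fun z hz => ?_).trans
      (Finset.sum_le_sum_of_subset_of_nonneg ((Finset.filter_subset _ S).trans hSA)
        fun _ _ _ => by positivity)
    obtain ⟨-, hxz, hxz'⟩ := Finset.mem_filter.1 hz
    push_cast
    calc (B.card : ℝ) ^ 2
        ≤ (16 * K ^ 2 * (commonNbrs G B x z).card) * (16 * K ^ 2 * (commonNbrs G B x' z).card) := by
          rw [sq]; exact mul_le_mul hxz hxz' (by positivity) (by positivity)
      _ = _ := by ring
  calc (A.card * B.card ^ 2 : ℝ) ≤ 2 * K * (2 * Z.card) * B.card ^ 2 := by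
        gcongr; exact hS.trans (by gcongr)
    _ = 4 * K * (Z.card * B.card ^ 2) := by ring
    _ ≤ 4 * K * (256 * K ^ 4 * (fourPaths G A B x x').card) := by gcongr
    _ = _ := by ring

variable {Γ : Type*} [AddCommGroup Γ] [DecidableEq Γ] {P : α → Γ} {Q : β → Γ} {φ : ℝ}

/-- A path `x, b, z, b', x'` writes `P x - P x'` as an alternating sum of four elements of
`P +_G Q`, and is determined by these up to the fibres of `P` and `Q`. -/
lemma card_fourPaths_le (hP : ∀ a, ((A.filter fun x => P x = a).card : ℝ) ≤ φ)
    (hQ : ∀ a, ((B.filter fun y => Q y = a).card : ℝ) ≤ φ) {S : Finset Γ}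
    (hS : ∀ p ∈ G, P p.1 + Q p.2 ∈ S) (x x' : α) :
    ((fourPaths G A B x x').card : ℝ) ≤ φ ^ 3 * ((S ×ˢ S ×ˢ S ×ˢ S).filter fun t =>
      t.1 - t.2.1 + t.2.2.1 - t.2.2.2 = P x - P x').card := by
  set Φ : α × β × β → Γ × Γ × Γ × Γ := fun p =>
    (P x + Q p.2.1, P p.1 + Q p.2.1, P p.1 + Q p.2.2, P x' + Q p.2.2) with hΦ
  have hφ : 0 ≤ φ := (Nat.cast_nonneg _).trans (hP 0)
  have hfibre : ∀ p ∈ fourPaths G A B x x',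
      (((fourPaths G A B x x').filter fun q => Φ q = Φ p).card : ℝ) ≤ φ ^ 3 := fun p _ => by
    have hsub : ((fourPaths G A B x x').filter fun q => Φ q = Φ p) ⊆
        (A.filter fun z => P z = P p.1) ×ˢ (B.filter fun b => Q b = Q p.2.1) ×ˢ
          (B.filter fun b => Q b = Q p.2.2) := fun q hq => by
      simp only [fourPaths, hΦ, Finset.mem_filter, Finset.mem_product, Prod.mk.injEq,
        add_right_inj] at hq ⊢
      obtain ⟨⟨⟨hz, hb, hb'⟩, -⟩, hQb, hPz, -, hQb'⟩ := hq
      exact ⟨⟨hz, by simpa [hQb] using hPz⟩, ⟨hb, hQb⟩, hb', hQb'⟩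
    refine (Nat.cast_le.2 (Finset.card_le_card hsub)).trans ?_
    rw [Finset.card_product, Finset.card_product]
    push_cast
    calc _ ≤ φ * (φ * φ) := by gcongr <;> apply_assumption
      _ = φ ^ 3 := by ring
  refine (card_le_mul_card_image_of_fibre_le hfibre).trans ?_
  gcongr
  intro t ht
  obtain ⟨p, hp, rfl⟩ := Finset.mem_image.1 ht
  simp only [fourPaths, commonNbrs, Finset.mem_filter] at hp
  simp only [Finset.mem_filter, Finset.mem_product, hΦ]
  exact ⟨⟨hS _ hp.2.1.2.1, hS _ hp.2.1.2.2, hS _ hp.2.2.2.2, hS _ hp.2.2.2.1⟩, by abel⟩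

lemma card_image_sub_image_mul_le (hP : ∀ a, ((A.filter fun x => P x = a).card : ℝ) ≤ φ)
    (hQ : ∀ a, ((B.filter fun y => Q y = a).card : ℝ) ≤ φ) {S : Finset Γ}
    (hS : ∀ p ∈ G, P p.1 + Q p.2 ∈ S) {A' : Finset α} {m : ℝ}
    (hm : ∀ x ∈ A', ∀ x' ∈ A', m ≤ (fourPaths G A B x x').card) :
    ((A'.image P - A'.image P).card : ℝ) * m ≤ φ ^ 3 * S.card ^ 4 := by
  set D := A'.image P - A'.image P with hD
  have hφ : 0 ≤ φ := (Nat.cast_nonneg _).trans (hP 0)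
  set alt : Γ × Γ × Γ × Γ → Γ := fun t => t.1 - t.2.1 + t.2.2.1 - t.2.2.2
  have hdiff : ∀ d ∈ D, m ≤ φ ^ 3 * ((S ×ˢ S ×ˢ S ×ˢ S).filter fun t => alt t = d).card := by
    intro d hd
    rw [hD, image_sub_image_eq_image_product] at hd
    obtain ⟨⟨x, x'⟩, hxx', rfl⟩ := Finset.mem_image.1 hd
    obtain ⟨hx, hx'⟩ := Finset.mem_product.1 hxx'
    exact (hm x hx x' hx').trans (card_fourPaths_le hP hQ hS x x')
  have hdisj : ∑ d ∈ D, ((S ×ˢ S ×ˢ S ×ˢ S).filter fun t => alt t = d).card ≤ S.card ^ 4 := by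
    refine (Finset.sum_card_fiberwise_eq_card_filter _ _ _).trans_le ?_
    refine (Finset.card_filter_le _ _).trans_eq ?_
    simp only [Finset.card_product]
    ring
  calc (D.card : ℝ) * m ≤
        ∑ d ∈ D, φ ^ 3 * (((S ×ˢ S ×ˢ S ×ˢ S).filter fun t => alt t = d).card : ℝ) := by
        rw [← nsmul_eq_mul]
        exact Finset.card_nsmul_le_sum _ _ _ hdiff
    _ ≤ φ ^ 3 * S.card ^ 4 := by
        rw [← Finset.mul_sum]
        gcongr
        exact_mod_cast hdisj

/-- The Balog–Szemerédi–Gowers theorem, for sumsets of images under maps `P`, `Q` which may have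
non-trivial fibres; the subset `A'` depends on the graph only. -/
theorem exists_subset_card_image_sub_image_le (hK : 0 < K) (hB : B.Nonempty) (hG : G ⊆ A ×ˢ B)
    (hdense : (A.card * B.card : ℝ) ≤ K * G.card) :
    ∃ A' ⊆ A, (A.card : ℝ) ≤ 4 * K * A'.card ∧
      ∀ (P : α → Γ) (Q : β → Γ) (φ : ℝ), (∀ a, ((A.filter fun x => P x = a).card : ℝ) ≤ φ) →
        (∀ a, ((B.filter fun y => Q y = a).card : ℝ) ≤ φ) →
        ((A'.image P - A'.image P).card : ℝ) * (A.card * B.card ^ 2) ≤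
          1024 * K ^ 5 * φ ^ 3 * (G.image fun p => P p.1 + Q p.2).card ^ 4 := by
  obtain ⟨A', hA', hcard, hpaths⟩ := exists_subset_many_fourPaths hK hB hG hdense
  refine ⟨A', hA', hcard, fun P Q φ hP hQ => ?_⟩
  have := card_image_sub_image_mul_le hP hQ
    (S := G.image fun p => P p.1 + Q p.2) (fun p hp => Finset.mem_image_of_mem _ hp)
    (m := A.card * B.card ^ 2 / (1024 * K ^ 5)) fun x hx x' hx' => by
      rw [div_le_iff₀' (by positivity)]
      exact hpaths x hx x' hx'
  rw [mul_div_assoc', div_le_iff₀ (by positivity)] at this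
  linarith

end BalogSzemerediGowers

section AdditiveCombinatorics

variable {α β Γ : Type*} [AddCommGroup Γ] [DecidableEq Γ]

lemma card_nsmul_sub_nsmul_le {M : Finset Γ} (hM : M.Nonempty) {κ : ℝ}
    (h : ((M - M).card : ℝ) ≤ κ * M.card) (m n : ℕ) :
    ((m • M - n • M).card : ℝ) ≤ κ ^ (m + n) * M.card := by
  have hM0 : (0 : ℝ) < M.card := by exact_mod_cast hM.card_pos
  have hplunnecke := (NNRat.cast_le (K := ℝ)).2
    (Finset.pluennecke_ruzsa_inequality_nsmul_sub_nsmul_sub hM M m n)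
  push_cast at hplunnecke
  refine hplunnecke.trans ?_
  gcongr
  rwa [div_le_iff₀ hM0]

/-- Each `Xᵢ` is covered by few translates of `M - M`, so the sum is covered by few translates of
`5M - 4M`. -/
lemma card_sub_add_sub_add_le {X₁ X₂ X₃ X₄ M : Finset Γ} (hM : M.Nonempty) {K κ : ℝ}
    (h₁ : ((X₁ + M).card : ℝ) ≤ K * M.card) (h₂ : ((X₂ + M).card : ℝ) ≤ K * M.card)
    (h₃ : ((X₃ + M).card : ℝ) ≤ K * M.card) (h₄ : ((X₄ + M).card : ℝ) ≤ K * M.card)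
    (hκ : ((M - M).card : ℝ) ≤ κ * M.card) :
    ((X₁ - X₂ + X₃ - X₄ + M).card : ℝ) ≤ K ^ 4 * κ ^ 9 * M.card := by
  obtain ⟨F₁, -, hF₁, hX₁⟩ := Finset.ruzsa_covering_add hM h₁
  obtain ⟨F₂, -, hF₂, hX₂⟩ := Finset.ruzsa_covering_add hM h₂
  obtain ⟨F₃, -, hF₃, hX₃⟩ := Finset.ruzsa_covering_add hM h₃
  obtain ⟨F₄, -, hF₄, hX₄⟩ := Finset.ruzsa_covering_add hM h₄
  have hcover : X₁ - X₂ + X₃ - X₄ + M ⊆ (F₁ - F₂ + F₃ - F₄) + (5 • M - 4 • M) := by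
    calc X₁ - X₂ + X₃ - X₄ + M ⊆ (F₁ + (M - M)) - (F₂ + (M - M)) + (F₃ + (M - M)) -
          (F₄ + (M - M)) + M := by gcongr
      _ = (F₁ - F₂ + F₃ - F₄) + (5 • M - 4 • M) := by
          simp only [sub_eq_add_neg, neg_add, neg_neg, ← neg_nsmul]
          generalize -M = M', -F₂ = F₂', -F₄ = F₄'
          abel
  have hK : 0 ≤ K := (Nat.cast_nonneg _).trans hF₁
  have hcenters : ((F₁ - F₂ + F₃ - F₄).card : ℝ) ≤ K * K * K * K := by
    calc ((F₁ - F₂ + F₃ - F₄).card : ℝ) ≤ F₁.card * F₂.card * F₃.card * F₄.card := by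
          exact_mod_cast Finset.card_sub_le.trans (Nat.mul_le_mul_right _
            (Finset.card_add_le.trans (Nat.mul_le_mul_right _ Finset.card_sub_le)))
      _ ≤ K * K * K * K := by gcongr
  calc ((X₁ - X₂ + X₃ - X₄ + M).card : ℝ)
      ≤ (F₁ - F₂ + F₃ - F₄).card * (5 • M - 4 • M).card := by
        exact_mod_cast (Finset.card_le_card hcover).trans Finset.card_add_le
    _ ≤ K * K * K * K * (κ ^ (5 + 4) * M.card) := by
        exact mul_le_mul hcenters (card_nsmul_sub_nsmul_le hM hκ 5 4) (Nat.cast_nonneg _)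
          (by positivity)
    _ = _ := by ring

lemma card_filter_fibre_lt_le [DecidableEq β] (S : Finset α) (f : α → β) {c : ℝ} (hc : 0 ≤ c) :
    ((S.filter fun i => ((S.filter fun j => f j = f i).card : ℝ) < c).card : ℝ) ≤
      c * (S.image f).card := by
  refine (card_le_mul_card_image_of_fibre_le (f := f) (c := c) fun i hi => ?_).trans ?_
  · refine le_trans ?_ (Finset.mem_filter.1 hi).2.le
    gcongr
    exact Finset.filter_subset _ _
  · gcongr
    exact Finset.filter_subset _ _

/-- Most pairs of `A` are far apart and have a popular difference, so some `y` forms such a pair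
with at least half of the elements of `A`. -/
lemma exists_many_far_popular_differences {A : Finset α} (hA : A.Nonempty) {e : α → Γ} {κ : ℝ}
    (hκ : 0 < κ) (hdiff : ((A.image e - A.image e).card : ℝ) ≤ κ * A.card) {far : α → α → Prop}
    (hfar : ∀ y ∈ A, 4 * (A.filter fun x => ¬far x y).card ≤ A.card) :
    ∃ y ∈ A, A.card ≤ 2 * (A.filter fun x => far x y ∧ (A.card : ℝ) ≤
      4 * κ * ((A ×ˢ A).filter fun p => e p.1 - e p.2 = e x - e y).card).card := by
  set r : α × α → ℝ := fun p =>
    ((A ×ˢ A).filter fun q => e q.1 - e q.2 = e p.1 - e p.2).card with hr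
  set close := (A ×ˢ A).filter fun p => ¬far p.1 p.2 with hclose
  set rare := (A ×ˢ A).filter fun p => r p < A.card / (4 * κ) with hrare
  set good := (A ×ˢ A).filter fun p => far p.1 p.2 ∧ (A.card : ℝ) ≤ 4 * κ * r p with hgood
  have hcloseCard : 4 * (close.card : ℝ) ≤ A.card ^ 2 := by
    have h : 4 * ∑ y ∈ A, (A.filter fun x => (x, y) ∈ close).card ≤ A.card * A.card := by
      rw [Finset.mul_sum, ← smul_eq_mul]
      refine Finset.sum_le_card_nsmul _ _ _ fun y hy => le_trans ?_ (hfar y hy)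
      gcongr 4 * Finset.card ?_
      exact Finset.monotone_filter_right _ fun x _ hx => (Finset.mem_filter.1 hx).2
    rw [sum_card_left_nbrs (Finset.filter_subset _ _)] at h
    exact_mod_cast h.trans_eq (sq _).symm
  have hrareCard : 4 * (rare.card : ℝ) ≤ A.card ^ 2 := by
    have h := card_filter_fibre_lt_le (A ×ˢ A) (fun p => e p.1 - e p.2)
      (c := A.card / (4 * κ)) (by positivity)
    rw [← image_sub_image_eq_image_product, div_mul_eq_mul_div, le_div_iff₀ (by positivity)] at h
    refine le_of_mul_le_mul_left ?_ hκ
    nlinarith [mul_le_mul_of_nonneg_left hdiff (Nat.cast_nonneg (α := ℝ) A.card)]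
  have hgoodCard : A.card * A.card ≤ 2 * good.card := by
    have hcover : A ×ˢ A ⊆ good ∪ (rare ∪ close) := fun p hp => by
      simp only [hgood, hrare, hclose, Finset.mem_union, Finset.mem_filter,
        lt_div_iff₀ (show 0 < 4 * κ by positivity), mul_comm (r p), ← not_le]
      tauto
    have h : (A.card : ℝ) * A.card ≤ good.card + (rare.card + close.card) := by
      rw [← Nat.cast_mul, ← Finset.card_product]
      exact_mod_cast (Finset.card_le_card hcover).trans ((Finset.card_union_le _ _).trans
        (Nat.add_le_add_left (Finset.card_union_le _ _) _))
    have : (A.card : ℝ) * A.card ≤ 2 * good.card := by nlinarith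
    exact_mod_cast this
  rw [← sum_card_left_nbrs (Finset.filter_subset _ (A ×ˢ A)), Finset.mul_sum,
    ← smul_eq_mul, ← Finset.sum_const] at hgoodCard
  obtain ⟨y, hy, hle⟩ := Finset.exists_le_of_sum_le hA hgoodCard
  refine ⟨y, hy, hle.trans (Nat.mul_le_mul_left 2 (Finset.card_le_card fun x => ?_))⟩
  simp only [hr, Finset.mem_filter]
  tauto

/-- The elements of `Z` in the `j`-th block of length `Λ`. -/
def block (Λ : ℤ) (Z : Finset ℤ) (j : ℤ) : Finset ℤ :=
  Z.filter fun z => z / Λ = j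

lemma sum_card_add_block_le {Y Z : Finset ℤ} {Λ : ℤ} (hΛ : 0 < Λ) (hY : ∀ x ∈ Y, |x| ≤ Λ)
    (J : Finset ℤ) : ∑ j ∈ J, (Y + block Λ Z j).card ≤ 3 * (Y + Z).card := by
  have hnear : ∀ j, Y + block Λ Z j ⊆
      (Y + Z).bipartiteAbove (fun j v => j - 1 ≤ v / Λ ∧ v / Λ ≤ j + 1) j := fun j v hv => by
    obtain ⟨x, hx, z, hz, rfl⟩ := Finset.mem_add.1 hv
    obtain ⟨hzZ, rfl⟩ := Finset.mem_filter.1 hz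
    obtain ⟨hlo, hhi⟩ := abs_le.1 (hY x hx)
    refine Finset.mem_filter.2 ⟨Finset.add_mem_add hx hzZ, ?_, ?_⟩
    · rw [Int.le_ediv_iff_mul_le hΛ]
      linarith [Int.ediv_mul_le z hΛ.ne']
    · rw [← Int.lt_add_one_iff, Int.ediv_lt_iff_lt_mul hΛ]
      linarith [Int.lt_ediv_add_one_mul_self z hΛ]
  have hthree : ∀ v, (J.bipartiteBelow (fun j v => j - 1 ≤ v / Λ ∧ v / Λ ≤ j + 1) v).card ≤ 3 :=
    fun v => by
      have hsub : J.bipartiteBelow (fun j v => j - 1 ≤ v / Λ ∧ v / Λ ≤ j + 1) v ⊆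
          Finset.Icc (v / Λ - 1) (v / Λ + 1) := fun j hj => by
        have := (Finset.mem_filter.1 hj).2
        rw [Finset.mem_Icc]
        omega
      refine (Finset.card_le_card hsub).trans ?_
      rw [Int.card_Icc]
      omega
  calc ∑ j ∈ J, (Y + block Λ Z j).card
      ≤ ∑ j ∈ J, ((Y + Z).bipartiteAbove (fun j v => j - 1 ≤ v / Λ ∧ v / Λ ≤ j + 1) j).card :=
        Finset.sum_le_sum fun j _ => Finset.card_le_card (hnear j)
    _ = ∑ v ∈ Y + Z, (J.bipartiteBelow (fun j v => j - 1 ≤ v / Λ ∧ v / Λ ≤ j + 1) v).card :=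
        Finset.sum_card_bipartiteAbove_eq_sum_card_bipartiteBelow _
    _ ≤ 3 * (Y + Z).card := by
        rw [mul_comm, ← smul_eq_mul]
        exact Finset.sum_le_card_nsmul _ _ _ fun v _ => hthree v

/-- If `X` and `X'` have diameter comparable to `Λ`, the sumsets of `X` and `X'` with different
blocks of `Z` hardly overlap, so that the hypotheses hold for one single block, to which the Ruzsa
triangle inequality applies. -/
lemma exists_card_sub_le_card_block {X X' Z : Finset ℤ} {Λ : ℤ} {B : ℝ} (hΛ : 0 < Λ)
    (hX : ∀ x ∈ X, |x| ≤ Λ) (hX' : ∀ x ∈ X', |x| ≤ Λ) (hZ : Z.Nonempty)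
    (h : ((X + Z).card : ℝ) ≤ B * Z.card) (h' : ((X' + Z).card : ℝ) ≤ B * Z.card) :
    ∃ j, ((X - X').card : ℝ) ≤ 36 * B ^ 2 * (block Λ Z j).card := by
  set J := Z.image fun z => z / Λ
  have hsum : ∑ j ∈ J, ((block Λ Z j).card : ℝ) = Z.card := by
    exact_mod_cast (Finset.card_eq_sum_card_image (fun z => z / Λ) Z).symm
  have hsumX : ∑ j ∈ J, ((X + block Λ Z j).card : ℝ) ≤ 3 * (X + Z).card := by
    exact_mod_cast sum_card_add_block_le hΛ hX J
  have hsumX' : ∑ j ∈ J, ((X' + block Λ Z j).card : ℝ) ≤ 3 * (X' + Z).card := by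
    exact_mod_cast sum_card_add_block_le hΛ hX' J
  obtain ⟨j, hj, hle⟩ := Finset.exists_le_of_sum_le (hZ.image _)
    (f := fun j => ((X + block Λ Z j).card : ℝ) + (X' + block Λ Z j).card)
    (g := fun j => 6 * B * (block Λ Z j).card) (by
      rw [Finset.sum_add_distrib, ← Finset.mul_sum, hsum]
      linarith)
  have hblock : (0 : ℝ) < (block Λ Z j).card := by
    obtain ⟨z, hz, rfl⟩ := Finset.mem_image.1 hj
    exact_mod_cast Finset.card_pos.2
      (show (block Λ Z (z / Λ)).Nonempty from ⟨z, Finset.mem_filter.2 ⟨hz, rfl⟩⟩)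
  have hruzsa : ((X - X').card : ℝ) * (block Λ Z j).card ≤
      (X + block Λ Z j).card * (X' + block Λ Z j).card := by
    exact_mod_cast Finset.ruzsa_triangle_inequality_sub_add_add X (block Λ Z j) X'
  refine ⟨j, le_of_mul_le_mul_right (hruzsa.trans ?_) hblock⟩
  have hX0 : (0 : ℝ) ≤ (X + block Λ Z j).card := Nat.cast_nonneg _
  have hX'0 : (0 : ℝ) ≤ (X' + block Λ Z j).card := Nat.cast_nonneg _
  calc ((X + block Λ Z j).card * (X' + block Λ Z j).card : ℝ)
      ≤ (6 * B * (block Λ Z j).card) * (6 * B * (block Λ Z j).card) :=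
        mul_le_mul (by linarith) (by linarith) hX'0 (by linarith)
    _ = _ := by ring

end AdditiveCombinatorics

section Dilates

variable {δ s C L : ℝ} {A : Finset ℝ}

/-- The non-concentration condition `#(A ∩ I) ≤ C |I|^s #A` for all intervals `I` of length at least
`δ`. -/
def IsFrostman (δ s C : ℝ) (A : Finset ℝ) : Prop :=
  ∀ x l : ℝ, δ ≤ l →
    ((A.filter fun y => y ∈ Set.Icc x (x + l)).card : ℝ) ≤ C * l ^ s * (A.card : ℝ)

lemma IsFrostman.card_le_of_abs_sub_le (hA : IsFrostman δ s C A) (hC : 0 ≤ C) {S : Finset ℝ}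
    (hS : S ⊆ A) {l : ℝ} (hl : δ ≤ l) (hl0 : 0 ≤ l) (h : ∀ x ∈ S, ∀ y ∈ S, |x - y| ≤ l) :
    (S.card : ℝ) ≤ C * l ^ s * A.card := by
  rcases S.eq_empty_or_nonempty with rfl | hne
  · rw [Finset.card_empty, Nat.cast_zero]
    positivity
  refine le_trans ?_ (hA (S.min' hne) l hl)
  refine Nat.cast_le.2 (Finset.card_le_card fun x hx => Finset.mem_filter.2
    ⟨hS hx, S.min'_le x hx, ?_⟩)
  linarith [le_abs_self (x - S.min' hne), h x hx _ (S.min'_mem hne)]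

lemma IsFrostman.mono (hA : IsFrostman δ s C A) (hδ : 0 ≤ δ) (hC : 0 ≤ C) {A' : Finset ℝ}
    (hA' : A' ⊆ A) {k : ℝ} (hk : (A.card : ℝ) ≤ k * A'.card) : IsFrostman δ s (C * k) A' :=
  fun x l hl => by
    have hl0 : 0 ≤ l := hδ.trans hl
    calc ((A'.filter fun y => y ∈ Set.Icc x (x + l)).card : ℝ)
        ≤ (A.filter fun y => y ∈ Set.Icc x (x + l)).card := by gcongr
      _ ≤ C * l ^ s * A.card := hA x l hl
      _ ≤ C * l ^ s * (k * A'.card) := by gcongr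
      _ = C * k * l ^ s * A'.card := by ring

/-- The cells of the dilate `t · A`. -/
noncomputable abbrev dilateCells (δ t : ℝ) (A : Finset ℝ) : Finset ℤ :=
  cells δ (fun x => t * x) A

/-- The cells of `{x² / 2 : x ∈ A}`; the factor `1 / 2` makes `x² / 2 - y² / 2` close to
`t x - t² / 2` when `x - y` is close to `t`. -/
noncomputable abbrev sqCells (δ : ℝ) (A : Finset ℝ) : Finset ℤ :=
  cells δ (fun x => x ^ 2 / 2) A

/-- A `δ`-discretised set of dimension `s`, bounded away from `0`, for which both `A - A` and
`{x² - y² : x, y ∈ A}` are barely larger than `A` at scale `δ`. All losses are measured by the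
single constant `L`. -/
structure HasSmallDifferences (δ s L : ℝ) (A : Finset ℝ) : Prop where
  nonempty : A.Nonempty
  one_div_le : ∀ x ∈ A, 1 / L ≤ x
  le_one : ∀ x ∈ A, x ≤ 1
  separated : (A : Set ℝ).Pairwise fun x y => δ ≤ |x - y|
  frostman : IsFrostman δ s L A
  card_mul_rpow_le : A.card * δ ^ s ≤ L
  card_sub_le : ((cells δ (fun x => x) A - cells δ (fun x => x) A).card : ℝ) ≤ L * A.card
  card_sqCells_sub_le : ((sqCells δ A - sqCells δ A).card : ℝ) ≤ L * A.card

lemma abs_sub_lt_of_floor_mul_sq_div_eq (hδ : 0 < δ) {c r : ℝ} (hc : c ≠ 0) (hr : 0 < r) {x y : ℝ}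
    (hx : r ≤ x) (hy : r ≤ y) (h : ⌊c * x ^ 2 / δ⌋ = ⌊c * y ^ 2 / δ⌋) :
    |x - y| < 1 / (2 * |c| * r) * δ := by
  have hsum : 2 * r ≤ x + y := by linarith
  have hclose := abs_sub_lt_of_floor_div_eq hδ h
  rw [show c * x ^ 2 - c * y ^ 2 = c * (x + y) * (x - y) by ring, abs_mul, abs_mul,
    abs_of_pos ((by positivity : 0 < 2 * r).trans_le hsum)] at hclose
  rw [one_div_mul_eq_div, lt_div_iff₀' (by positivity)]
  calc 2 * |c| * r * |x - y| = |c| * (2 * r) * |x - y| := by ring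
    _ ≤ |c| * (x + y) * |x - y| := by gcongr
    _ < δ := hclose

lemma HasSmallDifferences.card_le_mul_card_sqCells (h : HasSmallDifferences δ s L A) (hδ : 0 < δ)
    (hL : 1000 ≤ L) : (A.card : ℝ) ≤ 2 * L * (sqCells δ A).card := by
  have hL0 : 0 < L := by linarith
  have hinj := card_le_mul_card_image_of_separated hδ h.separated (r := L)
    (f := fun x => ⌊x ^ 2 / 2 / δ⌋) fun x hx y hy hxy => by
      have := abs_sub_lt_of_floor_mul_sq_div_eq hδ (c := 1 / 2) (by norm_num) (one_div_pos.2 hL0)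
        (h.one_div_le x hx) (h.one_div_le y hy) (by simpa only [one_div_mul_eq_div] using hxy)
      rwa [abs_of_pos (one_half_pos (α := ℝ)), mul_one_div_cancel two_ne_zero, one_mul,
        one_div_one_div] at this
  exact hinj.trans (mul_le_mul_of_nonneg_right (by linarith) (Nat.cast_nonneg _))

lemma HasSmallDifferences.card_sqCells_sub_le_mul_card_sqCells (h : HasSmallDifferences δ s L A)
    (hδ : 0 < δ) (hL : 1000 ≤ L) :
    ((sqCells δ A - sqCells δ A).card : ℝ) ≤ 2 * L ^ 2 * (sqCells δ A).card :=
  calc ((sqCells δ A - sqCells δ A).card : ℝ) ≤ L * A.card := h.card_sqCells_sub_le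
    _ ≤ L * (2 * L * (sqCells δ A).card) := by gcongr; exact h.card_le_mul_card_sqCells hδ hL
    _ = 2 * L ^ 2 * (sqCells δ A).card := by ring

/-- If `u = v + t` up to an error `e`, then `u² / 2 - v² / 2 = t u - t² / 2 + e (u + v - t) / 2`. -/
lemma card_dilateCells_sub_sqCells_le (hδ : 0 < δ) (hA0 : ∀ x ∈ A, 0 ≤ x) (hA1 : ∀ x ∈ A, x ≤ 1)
    {t : ℝ} (ht : |t| ≤ 1) {U : Finset ℝ} (hUA : U ⊆ A)
    (hU : ∀ u ∈ U, ∃ v ∈ A, |u - v - t| < 2 * δ) :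
    ((dilateCells δ t U - sqCells δ A).card : ℝ) ≤
      10 * (sqCells δ A - 2 • sqCells δ A).card := by
  choose! v hvA hv using hU
  have happrox : ∀ u ∈ U, |t * u / δ - u ^ 2 / 2 / δ + v u ^ 2 / 2 / δ - t ^ 2 / 2 / δ| < 3 := by
    intro u hu
    have hmid : |(u + v u - t) / 2| ≤ 3 / 2 := by
      have := abs_le.1 ht
      rw [abs_le]
      constructor <;> linarith [hA0 u (hUA hu), hA1 u (hUA hu), hA0 _ (hvA u hu), hA1 _ (hvA u hu)]
    rw [show t * u / δ - u ^ 2 / 2 / δ + v u ^ 2 / 2 / δ - t ^ 2 / 2 / δ =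
      -((u - v u - t) * ((u + v u - t) / 2)) / δ by ring, abs_div, abs_neg, abs_mul, abs_of_pos hδ,
      div_lt_iff₀ hδ]
    nlinarith [hv u hu, abs_nonneg (u - v u - t)]
  have htransfer := card_image_le_mul_card_image (S := U ×ˢ A) (c := 9)
    (f := fun p => ⌊p.1 ^ 2 / 2 / δ⌋ - (⌊v p.1 ^ 2 / 2 / δ⌋ + ⌊p.2 ^ 2 / 2 / δ⌋))
    (g := fun p => ⌊t * p.1 / δ⌋ - ⌊p.2 ^ 2 / 2 / δ⌋) (by
      rintro ⟨u, x⟩ hux ⟨u', x'⟩ hux' hf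
      have hu := abs_lt.1 (happrox u (Finset.mem_product.1 hux).1)
      have hu' := abs_lt.1 (happrox u' (Finset.mem_product.1 hux').1)
      have hf' : (⌊u ^ 2 / 2 / δ⌋ - (⌊v u ^ 2 / 2 / δ⌋ + ⌊x ^ 2 / 2 / δ⌋) : ℝ) =
        ⌊u' ^ 2 / 2 / δ⌋ - (⌊v u' ^ 2 / 2 / δ⌋ + ⌊x' ^ 2 / 2 / δ⌋) := by exact_mod_cast hf
      push_cast
      have hfract := fun y : ℝ => (⟨Int.floor_le y, Int.lt_floor_add_one y⟩ : _ ∧ _)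
      rw [abs_lt]
      constructor <;> linarith [hfract (t * u / δ), hfract (t * u' / δ), hfract (u ^ 2 / 2 / δ),
        hfract (u' ^ 2 / 2 / δ), hfract (v u ^ 2 / 2 / δ), hfract (v u' ^ 2 / 2 / δ)])
  rw [← image_sub_image_eq_image_product U A (fun u => ⌊t * u / δ⌋) fun x => ⌊x ^ 2 / 2 / δ⌋]
    at htransfer
  refine htransfer.trans ?_
  norm_num only
  gcongr
  refine Finset.image_subset_iff.2 fun p hp => ?_
  obtain ⟨hu, hx⟩ := Finset.mem_product.1 hp
  rw [two_nsmul]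
  exact Finset.sub_mem_sub (floor_mem_cells (hUA hu))
    (Finset.add_mem_add (floor_mem_cells (hvA _ hu)) (floor_mem_cells hx))

lemma card_image_fst_of_floor_sub_floor_eq (hδ : 0 < δ)
    (hsep : (A : Set ℝ).Pairwise fun x y => δ ≤ |x - y|) (d : ℤ) :
    (((A ×ˢ A).filter fun p => ⌊p.1 / δ⌋ - ⌊p.2 / δ⌋ = d).image Prod.fst).card =
      ((A ×ˢ A).filter fun p => ⌊p.1 / δ⌋ - ⌊p.2 / δ⌋ = d).card := by
  refine Finset.card_image_of_injOn ?_
  rintro ⟨u, v⟩ huv ⟨u', v'⟩ huv' (rfl : u = u')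
  simp only [Finset.mem_coe, Finset.mem_filter, Finset.mem_product] at huv huv'
  have hfloor : ⌊v / δ⌋ = ⌊v' / δ⌋ := by linarith [huv.2, huv'.2]
  rw [hsep.eq huv.1.2 huv'.1.2 (not_le.2 (abs_sub_lt_of_floor_div_eq hδ hfloor))]

lemma card_le_mul_card_dilateCells (hδ : 0 < δ)
    (hsep : (A : Set ℝ).Pairwise fun x y => δ ≤ |x - y|) {t r : ℝ} (hr : 0 < r) (hr1 : r ≤ 1)
    (ht : r ≤ |t|) : (A.card : ℝ) ≤ 3 / r * (dilateCells δ t A).card := by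
  refine (card_le_mul_card_image_of_separated hδ (r := 1 / r) hsep fun x _ y _ hxy => ?_).trans
    (mul_le_mul_of_nonneg_right ?_ (Nat.cast_nonneg _))
  · have := abs_sub_lt_of_floor_div_eq hδ hxy
    rw [← mul_sub, abs_mul] at this
    rw [one_div_mul_eq_div, lt_div_iff₀' hr]
    exact (mul_le_mul_of_nonneg_right ht (abs_nonneg _)).trans_lt this
  · rw [div_add' _ _ _ hr.ne']
    gcongr
    linarith

/-- The Ruzsa triangle inequality through the dilate of `U`, which is close to a subset of
`sqCells δ A - sqCells δ A`. -/
lemma HasSmallDifferences.card_dilateCells_add_sqCells_le (h : HasSmallDifferences δ s L A)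
    (hδ : 0 < δ) (hL : 1000 ≤ L) {t r : ℝ} (hr : 0 < r) (hrt : r ≤ |t|) (ht : |t| ≤ 1)
    {U : Finset ℝ} (hUA : U ⊆ A) (hU : ∀ u ∈ U, ∃ v ∈ A, |u - v - t| < 2 * δ)
    (hcard : (A.card : ℝ) ≤ 4 * L * U.card) :
    ((dilateCells δ t A + sqCells δ A).card : ℝ) ≤ L ^ 10 / r * (sqCells δ A).card := by
  have hL0 : 0 < L := by linarith
  have hA0 : ∀ x ∈ A, 0 ≤ x := fun x hx => (by positivity : 0 ≤ 1 / L).trans (h.one_div_le x hx)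
  set X := dilateCells δ t A
  set Y := dilateCells δ t U
  set M := sqCells δ A
  have hUY : (U.card : ℝ) ≤ 3 / r * Y.card :=
    card_le_mul_card_dilateCells hδ (h.separated.mono hUA) hr (hrt.trans ht) hrt
  have hXY : ((X - Y).card : ℝ) ≤ 5 * (L * A.card) :=
    calc ((X - Y).card : ℝ) ≤ (X - X).card := by
          exact_mod_cast Finset.card_le_card (Finset.sub_subset_sub_left (cells_subset_cells hUA))
      _ ≤ _ := card_cells_mul_sub_cells_mul_le hδ t _ _ A A
      _ ≤ 5 * (L * A.card) := mul_le_mul (by linarith) h.card_sub_le (Nat.cast_nonneg _)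
          (by norm_num)
  have hYM : ((Y - M).card : ℝ) ≤ 10 * ((2 * L ^ 2) ^ 3 * M.card) := by
    refine (card_dilateCells_sub_sqCells_le hδ hA0 h.le_one ht hUA hU).trans ?_
    gcongr
    simpa only [one_nsmul] using card_nsmul_sub_nsmul_le (cells_nonempty h.nonempty)
      (h.card_sqCells_sub_le_mul_card_sqCells hδ hL) 1 2
  have hY0 : (0 : ℝ) < Y.card := by
    have hA : (0 : ℝ) < A.card := by exact_mod_cast h.nonempty.card_pos
    exact pos_of_mul_pos_right ((hA.trans_le hcard).trans_le
      (mul_le_mul_of_nonneg_left hUY (by positivity)) |>.trans_eq (mul_assoc _ _ _).symm)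
      (by positivity)
  refine le_of_mul_le_mul_right ?_ hY0
  calc ((X + M).card : ℝ) * Y.card
      ≤ (X - Y).card * (Y - M).card := by
        exact_mod_cast Finset.ruzsa_triangle_inequality_add_sub_sub X Y M
    _ ≤ 5 * (L * (4 * L * (3 / r * Y.card))) * (10 * ((2 * L ^ 2) ^ 3 * M.card)) := by
        refine mul_le_mul (hXY.trans ?_) hYM (Nat.cast_nonneg _) (by positivity)
        gcongr
        exact hcard.trans (by gcongr)
    _ = 4800 * (L ^ 8 / r * M.card * Y.card) := by ring
    _ ≤ L ^ 2 * (L ^ 8 / r * M.card * Y.card) := by gcongr; nlinarith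
    _ = L ^ 10 / r * M.card * Y.card := by ring

lemma card_cells_sub_add_sub_add_le {ι : Type*} (f₁ f₂ f₃ f₄ : ι → ℝ) (S : Finset ι)
    (Z : Finset ℤ) :
    ((cells δ (fun i => f₁ i - f₂ i + f₃ i - f₄ i) S + Z).card : ℝ) ≤
      6 * (cells δ f₁ S - cells δ f₂ S + cells δ f₃ S - cells δ f₄ S + Z).card := by
  have htransfer := card_image_le_mul_card_image (S := S ×ˢ Z) (c := 5)
    (f := fun p => ⌊f₁ p.1 / δ⌋ - ⌊f₂ p.1 / δ⌋ + ⌊f₃ p.1 / δ⌋ - ⌊f₄ p.1 / δ⌋ + p.2)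
    (g := fun p => ⌊(f₁ p.1 - f₂ p.1 + f₃ p.1 - f₄ p.1) / δ⌋ + p.2) (by
      rintro ⟨i, z⟩ - ⟨j, w⟩ - hf
      have hf' : (⌊f₁ i / δ⌋ - ⌊f₂ i / δ⌋ + ⌊f₃ i / δ⌋ - ⌊f₄ i / δ⌋ + z : ℝ) =
        ⌊f₁ j / δ⌋ - ⌊f₂ j / δ⌋ + ⌊f₃ j / δ⌋ - ⌊f₄ j / δ⌋ + w := by exact_mod_cast hf
      have hfract := fun y : ℝ => (⟨Int.floor_le y, Int.lt_floor_add_one y⟩ : _ ∧ _)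
      have hsum := fun k => hfract ((f₁ k - f₂ k + f₃ k - f₄ k) / δ)
      simp only [add_div, sub_div] at hsum ⊢
      push_cast
      rw [abs_lt]
      constructor <;> linarith [hsum i, hsum j, hfract (f₁ i / δ), hfract (f₁ j / δ),
        hfract (f₂ i / δ), hfract (f₂ j / δ), hfract (f₃ i / δ), hfract (f₃ j / δ),
        hfract (f₄ i / δ), hfract (f₄ j / δ)])
  have hsum := image_add_image_eq_image_product S Z
    (fun i => ⌊(f₁ i - f₂ i + f₃ i - f₄ i) / δ⌋) fun z => z
  rw [Finset.image_id'] at hsum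
  rw [cells, hsum]
  refine htransfer.trans ?_
  norm_num only
  gcongr
  refine Finset.image_subset_iff.2 fun p hp => ?_
  obtain ⟨hi, hz⟩ := Finset.mem_product.1 hp
  exact Finset.add_mem_add (Finset.sub_mem_sub (Finset.add_mem_add (Finset.sub_mem_sub
    (floor_mem_cells hi) (floor_mem_cells hi)) (floor_mem_cells hi)) (floor_mem_cells hi)) hz

lemma HasSmallDifferences.card_dilateCells_sub_add_sub_add_sqCells_le
    (h : HasSmallDifferences δ s L A) (hδ : 0 < δ) (hL : 1000 ≤ L) {r t₁ t₂ t₃ t₄ : ℝ} (hr : 0 < r)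
    (h₁ : ((dilateCells δ t₁ A + sqCells δ A).card : ℝ) ≤ L ^ 10 / r * (sqCells δ A).card)
    (h₂ : ((dilateCells δ t₂ A + sqCells δ A).card : ℝ) ≤ L ^ 10 / r * (sqCells δ A).card)
    (h₃ : ((dilateCells δ t₃ A + sqCells δ A).card : ℝ) ≤ L ^ 10 / r * (sqCells δ A).card)
    (h₄ : ((dilateCells δ t₄ A + sqCells δ A).card : ℝ) ≤ L ^ 10 / r * (sqCells δ A).card) :
    ((dilateCells δ (t₁ - t₂ + t₃ - t₄) A + sqCells δ A).card : ℝ) ≤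
      L ^ 60 / r ^ 4 * (sqCells δ A).card := by
  have hcells := card_cells_sub_add_sub_add_le (δ := δ) (fun x => t₁ * x) (fun x => t₂ * x)
    (fun x => t₃ * x) (fun x => t₄ * x) A (sqCells δ A)
  simp only [← sub_mul, ← add_mul] at hcells
  have hcover := card_sub_add_sub_add_le (cells_nonempty h.nonempty) h₁ h₂ h₃ h₄
    (h.card_sqCells_sub_le_mul_card_sqCells hδ hL)
  calc ((dilateCells δ (t₁ - t₂ + t₃ - t₄) A + sqCells δ A).card : ℝ)
      ≤ 6 * ((L ^ 10 / r) ^ 4 * (2 * L ^ 2) ^ 9 * (sqCells δ A).card) :=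
        hcells.trans (mul_le_mul_of_nonneg_left hcover (by norm_num))
    _ = 3072 * (L ^ 58 / r ^ 4 * (sqCells δ A).card) := by ring
    _ ≤ L ^ 2 * (L ^ 58 / r ^ 4 * (sqCells δ A).card) := by gcongr; nlinarith
    _ = L ^ 60 / r ^ 4 * (sqCells δ A).card := by ring

lemma abs_floor_div_le_ceil (hδ : 0 < δ) {x R : ℝ} (h : |x| ≤ R) : |⌊x / δ⌋| ≤ ⌈R / δ⌉ := by
  obtain ⟨hlo, hhi⟩ := abs_le.1 h
  refine abs_le.2 ⟨Int.le_floor.2 ?_, Int.floor_le_ceil _ |>.trans (Int.ceil_mono (by gcongr))⟩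
  rw [Int.cast_neg, neg_le]
  exact (by rw [← neg_div]; gcongr; linarith : -(x / δ) ≤ R / δ).trans (Int.le_ceil _)

lemma sub_le_add_of_floor_div_ediv_eq {x y R : ℝ} (hδ : 0 < δ) (hR : 0 < R)
    (h : ⌊x / δ⌋ / ⌈R / δ⌉ = ⌊y / δ⌋ / ⌈R / δ⌉) : x - y ≤ R + δ := by
  have hΛ : 0 < ⌈R / δ⌉ := Int.ceil_pos.2 (by positivity)
  have hfloor : (⌊x / δ⌋ - ⌊y / δ⌋ + 1 : ℝ) ≤ ⌈R / δ⌉ := by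
    have hx := Int.lt_ediv_add_one_mul_self ⌊x / δ⌋ hΛ
    have hy := Int.ediv_mul_le ⌊y / δ⌋ hΛ.ne'
    rw [h] at hx
    exact_mod_cast (by linarith : ⌊x / δ⌋ - ⌊y / δ⌋ + 1 ≤ ⌈R / δ⌉)
  refine (div_le_div_iff_of_pos_right hδ).1 ?_
  rw [sub_div, add_div, div_self hδ.ne']
  linarith [Int.lt_floor_add_one (x / δ), Int.floor_le (y / δ), Int.ceil_lt_add_one (R / δ)]

lemma HasSmallDifferences.card_block_sqCells_le (h : HasSmallDifferences δ s L A) (hδ : 0 < δ)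
    (hs1 : s < 1) (hL : 1000 ≤ L) {R : ℝ} (hR : δ ≤ R) (j : ℤ) :
    ((block ⌈R / δ⌉ (sqCells δ A) j).card : ℝ) ≤ 2 * L ^ 2 * R ^ s * A.card := by
  have hL0 : 0 < L := by linarith
  have hR0 : 0 < R := hδ.trans_le hR
  set S := A.filter fun x => ⌊x ^ 2 / 2 / δ⌋ / ⌈R / δ⌉ = j
  have hblock : (block ⌈R / δ⌉ (sqCells δ A) j).card ≤ S.card := by
    rw [block, sqCells, cells, Finset.filter_image]
    exact Finset.card_image_le
  have hdiam : ∀ x ∈ S, ∀ y ∈ S, x - y ≤ 2 * R * L := by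
    intro x hx y hy
    obtain ⟨hxA, hxj⟩ := Finset.mem_filter.1 hx
    obtain ⟨hyA, hyj⟩ := Finset.mem_filter.1 hy
    have hsq := sub_le_add_of_floor_div_ediv_eq hδ hR0 (hxj.trans hyj.symm)
    rcases le_total x y with hxy | hxy
    · linarith [mul_pos hR0 hL0]
    · rw [← div_le_iff₀ hL0, div_eq_mul_one_div]
      have := mul_le_mul_of_nonneg_left (add_le_add (h.one_div_le x hxA) (h.one_div_le y hyA))
        (sub_nonneg.2 hxy)
      linarith
  have hRL : δ ≤ 2 * R * L := by nlinarith
  calc ((block ⌈R / δ⌉ (sqCells δ A) j).card : ℝ) ≤ S.card := by exact_mod_cast hblock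
    _ ≤ L * (2 * R * L) ^ s * A.card := h.frostman.card_le_of_abs_sub_le hL0.le
        (Finset.filter_subset _ _) hRL (by positivity) fun x hx y hy =>
          abs_sub_le_iff.2 ⟨hdiam x hx y hy, hdiam y hy x hx⟩
    _ = L * ((2 * L) ^ s * R ^ s) * A.card := by
        rw [← Real.mul_rpow (by positivity) hR0.le]
        ring_nf
    _ ≤ L * ((2 * L) * R ^ s) * A.card := by
        gcongr
        exact Real.rpow_le_self_of_one_le (by linarith) hs1.le
    _ = 2 * L ^ 2 * R ^ s * A.card := by ring

lemma HasSmallDifferences.card_dilateCells_sub_dilateCells_le (h : HasSmallDifferences δ s L A)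
    (hδ : 0 < δ) (hs1 : s < 1) (hL : 1000 ≤ L) {B w w' R : ℝ} (hR : δ ≤ R)
    (hw : |w| ≤ R) (hw' : |w'| ≤ R)
    (hB : ((dilateCells δ w A + sqCells δ A).card : ℝ) ≤ B * (sqCells δ A).card)
    (hB' : ((dilateCells δ w' A + sqCells δ A).card : ℝ) ≤ B * (sqCells δ A).card) :
    ((dilateCells δ w A - dilateCells δ w' A).card : ℝ) ≤ 72 * B ^ 2 * L ^ 2 * R ^ s * A.card := by
  have hR0 : 0 < R := hδ.trans_le hR
  have hbound : ∀ {w : ℝ}, |w| ≤ R → ∀ z ∈ dilateCells δ w A, |z| ≤ ⌈R / δ⌉ := fun {w} hw z hz => by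
    obtain ⟨x, hx, rfl⟩ := Finset.mem_image.1 hz
    have hx0 : 0 ≤ x := (by positivity : 0 ≤ 1 / L).trans (h.one_div_le x hx)
    refine abs_floor_div_le_ceil hδ ?_
    rw [abs_mul, abs_of_nonneg hx0]
    exact (mul_le_of_le_one_right (abs_nonneg w) (h.le_one x hx)).trans hw
  obtain ⟨j, hj⟩ := exists_card_sub_le_card_block (Int.ceil_pos.2 (by positivity)) (hbound hw)
    (hbound hw') (cells_nonempty h.nonempty) hB hB'
  calc ((dilateCells δ w A - dilateCells δ w' A).card : ℝ)
      ≤ 36 * B ^ 2 * (2 * L ^ 2 * R ^ s * A.card) :=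
        hj.trans (mul_le_mul_of_nonneg_left (h.card_block_sqCells_le hδ hs1 hL hR j)
          (by positivity))
    _ = 72 * B ^ 2 * L ^ 2 * R ^ s * A.card := by ring

end Dilates

section Pivot

variable {δ s L : ℝ} {A : Finset ℝ}

lemma mul_rpow_le_mul_rpow {c r : ℝ} (hc : 1 ≤ c) (hr : 0 ≤ r) (hs : s ≤ 1) :
    (c * r) ^ s ≤ c * r ^ s := by
  rw [mul_rpow (by linarith) hr]
  exact mul_le_mul_of_nonneg_right (rpow_le_self_of_one_le hc hs) (by positivity)

lemma inv_pow_mul_rpow_le (hL : 1 ≤ L) (k : ℕ) {q : ℕ} (hq : 1 ≤ s * q) :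
    ((L ^ (k * q))⁻¹) ^ s ≤ (L ^ k)⁻¹ := by
  have hL0 : 0 ≤ L := by linarith
  rw [inv_rpow (by positivity)]
  gcongr
  rw [pow_mul, ← rpow_natCast (L ^ k) q, ← rpow_mul (by positivity), mul_comm]
  exact self_le_rpow_of_one_le (one_le_pow₀ hL) hq

lemma HasSmallDifferences.four_mul_card_filter_lt_le (h : HasSmallDifferences δ s L A)
    (hs1 : s < 1) (hL : 1000 ≤ L) {r : ℝ} (hr : 0 ≤ r) (hδr : δ ≤ r) (hrs : r ^ s ≤ (L ^ 2)⁻¹)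
    (y : ℝ) : 4 * (A.filter fun x => |x - y| < r).card ≤ A.card := by
  have hL0 : 0 < L := by linarith
  have hclose : ∀ x ∈ A.filter (fun x => |x - y| < r), ∀ z ∈ A.filter (fun x => |x - y| < r),
      |x - z| ≤ 2 * r := fun x hx z hz => by
    have hx := (Finset.mem_filter.1 hx).2
    have hz := (Finset.mem_filter.1 hz).2
    rw [abs_sub_comm] at hz
    linarith [abs_sub_le x y z]
  have hcard := h.frostman.card_le_of_abs_sub_le hL0.le (Finset.filter_subset _ A)
    (by linarith) (by linarith) hclose
  rw [← Nat.cast_le (α := ℝ)]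
  push_cast
  calc 4 * ((A.filter fun x => |x - y| < r).card : ℝ)
      ≤ 4 * (L * (2 * (L ^ 2)⁻¹) * A.card) := by
        refine mul_le_mul_of_nonneg_left (hcard.trans ?_) (by norm_num)
        gcongr
        exact (mul_rpow_le_mul_rpow one_le_two hr hs1.le).trans (by gcongr)
    _ = 8 / L * A.card := by field_simp; ring
    _ ≤ A.card :=
        mul_le_of_le_one_left (Nat.cast_nonneg _) ((div_le_one hL0).2 (by linarith))

lemma HasSmallDifferences.card_dilateCells_sub_add_sqCells_le (h : HasSmallDifferences δ s L A)
    (hδ : 0 < δ) (hL : 1000 ≤ L) {r x y : ℝ} (hr : 0 < r) (hx : x ∈ A) (hy : y ∈ A)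
    (hxy : r ≤ |x - y|)
    (hpop : (A.card : ℝ) ≤
      4 * L * ((A ×ˢ A).filter fun p => ⌊p.1 / δ⌋ - ⌊p.2 / δ⌋ = ⌊x / δ⌋ - ⌊y / δ⌋).card) :
    ((dilateCells δ (x - y) A + sqCells δ A).card : ℝ) ≤ L ^ 10 / r * (sqCells δ A).card := by
  have hA0 : ∀ x ∈ A, 0 ≤ x := fun x hx =>
    (one_div_nonneg.2 (by linarith)).trans (h.one_div_le x hx)
  rw [← card_image_fst_of_floor_sub_floor_eq hδ h.separated] at hpop
  refine h.card_dilateCells_add_sqCells_le hδ hL hr hxy ?_ ?_ (fun u hu => ?_) hpop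
  · rw [abs_le]
    constructor <;> linarith [hA0 x hx, hA0 y hy, h.le_one x hx, h.le_one y hy]
  · exact Finset.image_subset_iff.2 fun p hp =>
      (Finset.mem_product.1 (Finset.mem_filter.1 hp).1).1
  · obtain ⟨⟨u, v⟩, huv, rfl⟩ := Finset.mem_image.1 hu
    obtain ⟨hmem, heq⟩ := Finset.mem_filter.1 huv
    exact ⟨v, (Finset.mem_product.1 hmem).2, abs_sub_sub_sub_lt_of_floor_div_sub_eq hδ heq⟩

lemma HasSmallDifferences.exists_subset_card_dilateCells_add_sqCells_le
    (h : HasSmallDifferences δ s L A) (hδ : 0 < δ) (hs1 : s < 1) (hL : 1000 ≤ L) {r : ℝ}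
    (hδr : δ ≤ r) (hrs : r ^ s ≤ (L ^ 2)⁻¹) :
    ∃ A' ⊆ A, A.card ≤ 2 * A'.card ∧ ∀ T ∈ A' - A' + A' - A',
      ((dilateCells δ T A + sqCells δ A).card : ℝ) ≤ L ^ 60 / r ^ 4 * (sqCells δ A).card := by
  have hr : 0 < r := hδ.trans_le hδr
  obtain ⟨y, hy, hcard⟩ := exists_many_far_popular_differences h.nonempty (e := fun x => ⌊x / δ⌋)
    (by linarith) h.card_sub_le (far := fun x y => r ≤ |x - y|) fun y _ => by
      simpa only [not_le] using h.four_mul_card_filter_lt_le hs1 hL hr.le hδr hrs y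
  refine ⟨_, Finset.filter_subset _ A, hcard, fun T hT => ?_⟩
  obtain ⟨_, ⟨_, ⟨x₁, h₁, x₂, h₂, rfl⟩, x₃, h₃, rfl⟩, x₄, h₄, rfl⟩ := by
    simpa only [Finset.mem_sub, Finset.mem_add, exists_and_left] using hT
  have hdilate : ∀ x ∈ A.filter (fun x => r ≤ |x - y| ∧ (A.card : ℝ) ≤ 4 * L *
      ((A ×ˢ A).filter fun p => ⌊p.1 / δ⌋ - ⌊p.2 / δ⌋ = ⌊x / δ⌋ - ⌊y / δ⌋).card),
      ((dilateCells δ (x - y) A + sqCells δ A).card : ℝ) ≤ L ^ 10 / r * (sqCells δ A).card :=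
    fun x hx => by
      obtain ⟨hxA, hfar, hpop⟩ := Finset.mem_filter.1 hx
      exact h.card_dilateCells_sub_add_sqCells_le hδ hL hr hxA hy hfar hpop
  rw [show x₁ - x₂ + x₃ - x₄ = x₁ - y - (x₂ - y) + (x₃ - y) - (x₄ - y) by ring]
  exact h.card_dilateCells_sub_add_sub_add_sqCells_le hδ hL hr (hdilate x₁ h₁) (hdilate x₂ h₂)
    (hdilate x₃ h₃) (hdilate x₄ h₄)

/-- A `δ`-discretised set of dimension `s` such that, for all `T, T'` in `A - A + A - A`, the set
`T A - T' A` has at scale `δ` hardly more cells than expected of `T A` or `T' A` alone: about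
`R ^ s * #A` when `|T|, |T'| ≤ R`. -/
structure IsPivot (δ s L : ℝ) (A : Finset ℝ) : Prop where
  nonempty : A.Nonempty
  nonneg : ∀ x ∈ A, 0 ≤ x
  le_one : ∀ x ∈ A, x ≤ 1
  card_mul_rpow_le : A.card * δ ^ s ≤ L
  frostman : IsFrostman δ s L A
  card_dilateCells_sub_le : ∀ T ∈ A - A + A - A, ∀ T' ∈ A - A + A - A, ∀ R, δ ≤ R → |T| ≤ R →
    |T'| ≤ R → ((dilateCells δ T A - dilateCells δ T' A).card : ℝ) ≤ L * R ^ s * A.card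

theorem HasSmallDifferences.exists_isPivot (h : HasSmallDifferences δ s L A) (hδ : 0 < δ)
    (hs1 : s < 1) (hL : 1000 ≤ L) {q : ℕ} (hq : 1 ≤ s * q) (hδq : δ ≤ (L ^ (2 * q))⁻¹) :
    ∃ A', IsPivot δ s (L ^ (16 * q + 123)) A' := by
  have hL0 : 0 < L := by linarith
  have hL1 : 1 ≤ L := by linarith
  obtain ⟨A', hA', hcard, hsum⟩ := h.exists_subset_card_dilateCells_add_sqCells_le hδ hs1 hL hδq
    (inv_pow_mul_rpow_le hL1 2 hq)
  rw [inv_pow, div_inv_eq_mul, ← pow_mul, ← pow_add] at hsum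
  have hcard : (A.card : ℝ) ≤ 2 * A'.card := by exact_mod_cast hcard
  have hpow : 144 * L ^ (16 * q + 122) ≤ L ^ (16 * q + 123) := by
    rw [pow_succ' _ (16 * q + 122)]
    gcongr
    linarith
  have hLpow : 2 * L ≤ L ^ (16 * q + 123) := by
    nlinarith [le_self_pow₀ hL1 (show 16 * q + 122 ≠ 0 by omega)]
  refine ⟨A', ?_, fun x hx => (one_div_nonneg.2 hL0.le).trans (h.one_div_le x (hA' hx)),
    fun x hx => h.le_one x (hA' hx), ?_, fun x l hl => ?_, fun T hT T' hT' R hR hTR hTR' => ?_⟩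
  · have := Nat.cast_pos (α := ℝ).2 h.nonempty.card_pos
    exact Finset.card_pos.1 (Nat.cast_pos (α := ℝ).1 (by linarith))
  · calc (A'.card : ℝ) * δ ^ s ≤ A.card * δ ^ s := by gcongr
      _ ≤ L := h.card_mul_rpow_le
      _ ≤ L ^ (16 * q + 123) := by linarith
  · refine (h.frostman.mono hδ.le hL0.le hA' hcard x l hl).trans ?_
    have hl0 : 0 ≤ l := hδ.le.trans hl
    gcongr
    linarith
  · have hR0 : 0 ≤ R := hδ.le.trans hR
    calc ((dilateCells δ T A' - dilateCells δ T' A').card : ℝ)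
        ≤ (dilateCells δ T A - dilateCells δ T' A).card := by
          gcongr <;> exact cells_subset_cells hA'
      _ ≤ 72 * (L ^ (60 + 2 * q * 4)) ^ 2 * L ^ 2 * R ^ s * A.card :=
          h.card_dilateCells_sub_dilateCells_le hδ hs1 hL hR hTR hTR' (hsum T hT) (hsum T' hT')
      _ ≤ 72 * (L ^ (60 + 2 * q * 4)) ^ 2 * L ^ 2 * R ^ s * (2 * A'.card) := by gcongr
      _ = 144 * L ^ (16 * q + 122) * R ^ s * A'.card := by
          rw [show 16 * q + 122 = (60 + 2 * q * 4) * 2 + 2 by ring, pow_add, pow_mul]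
          ring
      _ ≤ L ^ (16 * q + 123) * R ^ s * A'.card := by gcongr

end Pivot

section QuotientSet

variable {δ s L : ℝ} {A : Finset ℝ}

lemma IsFrostman.card_le_of_abs_mul_sub_mul_le {C : ℝ} (hA : IsFrostman δ s C A) (hδ : 0 ≤ δ)
    (hC : 0 ≤ C) {S : Finset (ℝ × ℝ)} (hS : S ⊆ A ×ˢ A) {t t' η r : ℝ} (ht : t ≠ 0)
    (hη : δ * |t| ≤ η) (hr : δ ≤ r)
    (hform : ∀ p ∈ S, ∀ p' ∈ S, |t * (p.1 - p'.1) - t' * (p.2 - p'.2)| ≤ η)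
    (hsnd : ∀ p ∈ S, ∀ p' ∈ S, |p.2 - p'.2| ≤ r) :
    (S.card : ℝ) ≤ C * (η / |t|) ^ s * A.card * (C * r ^ s * A.card) := by
  have ht0 : 0 < |t| := abs_pos.2 ht
  have hl : δ ≤ η / |t| := (le_div_iff₀ ht0).2 hη
  have hl0 : 0 ≤ η / |t| := hδ.trans hl
  have hsndCard : ((S.image Prod.snd).card : ℝ) ≤ C * r ^ s * A.card := by
    refine hA.card_le_of_abs_sub_le hC
      (Finset.image_subset_iff.2 fun p hp => (Finset.mem_product.1 (hS hp)).2) hr (hδ.trans hr) ?_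
    simpa only [Finset.forall_mem_image] using hsnd
  refine (card_le_mul_card_image_of_fibre_le (f := Prod.snd) fun q _ => ?_).trans
    (mul_le_mul_of_nonneg_left hsndCard (by positivity))
  have hinj : Set.InjOn Prod.fst (S.filter fun p => p.2 = q.2 : Set (ℝ × ℝ)) :=
    fun p hp p' hp' h =>
      Prod.ext h ((Finset.mem_filter.1 hp).2.trans (Finset.mem_filter.1 hp').2.symm)
  rw [← Finset.card_image_of_injOn hinj]
  refine hA.card_le_of_abs_sub_le hC (Finset.image_subset_iff.2 fun p hp =>
    (Finset.mem_product.1 (hS (Finset.mem_filter.1 hp).1)).1) hl hl0 ?_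
  simp only [Finset.forall_mem_image, Finset.mem_filter]
  rintro p ⟨hp, hpq⟩ p' ⟨hp', hpq'⟩
  have hfst := hform p hp p' hp'
  rw [hpq, hpq', sub_self, mul_zero, sub_zero, abs_mul] at hfst
  exact (le_div_iff₀' ht0).2 hfst

/-- The quotients `(x - y) / (z - w)` of differences of elements of `A` with `|z - w| ≥ r`. -/
def farQuotients (r : ℝ) (A : Finset ℝ) : Set ℝ :=
  {ξ | ∃ x ∈ A, ∃ y ∈ A, ∃ z ∈ A, ∃ w ∈ A, r ≤ |z - w| ∧ ξ = (x - y) / (z - w)}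

lemma IsFrostman.card_filter_floor_sub_floor_le {C : ℝ} (hA : IsFrostman δ s C A) (hδ : 0 < δ)
    (hC : 0 ≤ C) {t t' r : ℝ} (ht : t ≠ 0) (ht2 : |t| ≤ 2) (hr : δ ≤ r)
    (hsnd : ∀ p ∈ A ×ˢ A, ∀ p' ∈ A ×ˢ A, |t * (p.1 - p'.1) - t' * (p.2 - p'.2)| < 2 * δ →
      |p.2 - p'.2| ≤ r) (z : ℤ) :
    (((A ×ˢ A).filter fun p => ⌊t * p.1 / δ⌋ - ⌊t' * p.2 / δ⌋ = z).card : ℝ) ≤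
      C * (2 * δ / |t|) ^ s * A.card * (C * r ^ s * A.card) := by
  set S := (A ×ˢ A).filter fun p => ⌊t * p.1 / δ⌋ - ⌊t' * p.2 / δ⌋ = z
  have hclose : ∀ p ∈ S, ∀ p' ∈ S, |t * (p.1 - p'.1) - t' * (p.2 - p'.2)| < 2 * δ :=
    fun p hp p' hp' => by
      rw [show t * (p.1 - p'.1) - t' * (p.2 - p'.2)
        = t * p.1 - t' * p.2 - (t * p'.1 - t' * p'.2) by ring]
      exact abs_sub_sub_sub_lt_of_floor_div_sub_eq hδ
        ((Finset.mem_filter.1 hp).2.trans (Finset.mem_filter.1 hp').2.symm)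
  exact hA.card_le_of_abs_mul_sub_mul_le hδ.le hC (Finset.filter_subset _ _) ht (by nlinarith) hr
    (fun p hp p' hp' => (hclose p hp p' hp').le) fun p hp p' hp' =>
      hsnd p (Finset.mem_filter.1 hp).1 p' (Finset.mem_filter.1 hp').1 (hclose p hp p' hp')

lemma IsPivot.exists_abs_mul_sub_mul_lt (h : IsPivot δ s L A) (hδ : 0 < δ) (hs1 : s < 1)
    (hL : 0 ≤ L) {T T' r : ℝ} (hT : T ∈ A - A + A - A) (hT' : T' ∈ A - A + A - A) (hT2 : |T| ≤ 2)
    (hTT' : |T'| ≤ 2 * |T|) (hδT : δ ≤ 2 * |T|) (hδr : δ ≤ r) (hrs : 4 * L ^ 4 * r ^ s < 1) :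
    ∃ x ∈ A, ∃ y ∈ A, ∃ z ∈ A, ∃ v ∈ A, |T * (x - z) - T' * (y - v)| < 2 * δ ∧ r ≤ |y - v| := by
  by_contra! hcon
  have hr0 : 0 ≤ r := hδ.le.trans hδr
  have hTpos : 0 < |T| := by linarith
  have hN : (0 : ℝ) < A.card := Nat.cast_pos.2 h.nonempty.card_pos
  set f : ℝ × ℝ → ℤ := fun p => ⌊T * p.1 / δ⌋ - ⌊T' * p.2 / δ⌋
  have hfibre : ∀ p₀ ∈ A ×ˢ A, (((A ×ˢ A).filter fun p => f p = f p₀).card : ℝ) ≤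
      L * (2 * δ / |T|) ^ s * A.card * (L * r ^ s * A.card) := fun p₀ _ =>
    h.frostman.card_filter_floor_sub_floor_le hδ hL (abs_pos.1 hTpos) hT2 hδr
      (fun p hp p' hp' hclose =>
        (hcon p.1 (Finset.mem_product.1 hp).1 p.2 (Finset.mem_product.1 hp).2 p'.1
          (Finset.mem_product.1 hp').1 p'.2 (Finset.mem_product.1 hp').2 hclose).le) _
  have himage : (((A ×ˢ A).image f).card : ℝ) ≤ L * (2 * |T|) ^ s * A.card := by
    rw [← image_sub_image_eq_image_product A A (fun x => ⌊T * x / δ⌋) (fun x => ⌊T' * x / δ⌋)]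
    exact h.card_dilateCells_sub_le T hT T' hT' _ hδT (by linarith) hTT'
  have hscale : (2 * δ / |T|) ^ s * (2 * |T|) ^ s ≤ 4 * δ ^ s := by
    rw [← mul_rpow (by positivity) (by positivity),
      show 2 * δ / |T| * (2 * |T|) = 4 * δ by field_simp; ring]
    exact mul_rpow_le_mul_rpow (by norm_num) hδ.le hs1.le
  have hcontra : (A.card : ℝ) ^ 2 ≤ 4 * L ^ 4 * r ^ s * (A.card : ℝ) ^ 2 :=
    calc (A.card : ℝ) ^ 2 = (A ×ˢ A).card := by rw [Finset.card_product, sq, Nat.cast_mul]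
      _ ≤ L * (2 * δ / |T|) ^ s * A.card * (L * r ^ s * A.card) * ((A ×ˢ A).image f).card :=
          card_le_mul_card_image_of_fibre_le hfibre
      _ ≤ L * (2 * δ / |T|) ^ s * A.card * (L * r ^ s * A.card) * (L * (2 * |T|) ^ s * A.card) := by
          gcongr
      _ = L ^ 3 * ((2 * δ / |T|) ^ s * (2 * |T|) ^ s) * r ^ s * (A.card : ℝ) ^ 3 := by ring
      _ ≤ L ^ 3 * (4 * δ ^ s) * r ^ s * (A.card : ℝ) ^ 3 := by gcongr
      _ = 4 * L ^ 3 * r ^ s * (A.card : ℝ) ^ 2 * (A.card * δ ^ s) := by ring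
      _ ≤ 4 * L ^ 3 * r ^ s * (A.card : ℝ) ^ 2 * L := by gcongr; exact h.card_mul_rpow_le
      _ = 4 * L ^ 4 * r ^ s * (A.card : ℝ) ^ 2 := by ring
  have : 0 < (A.card : ℝ) ^ 2 := by positivity
  nlinarith

lemma IsPivot.exists_mem_farQuotients_abs_sub_div_le (h : IsPivot δ s L A) (hδ : 0 < δ)
    (hs1 : s < 1) (hL : 0 ≤ L) {T T' r ρ : ℝ} (hT : T ∈ A - A + A - A) (hT' : T' ∈ A - A + A - A)
    (hT2 : |T| ≤ 2) (hTT' : |T'| ≤ 2 * |T|) (hrT : 2 * r ≤ |T|) (hδr : δ ≤ r)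
    (hrs : 4 * L ^ 4 * r ^ s < 1) (hρ : δ ≤ ρ * r ^ 2) :
    ∃ ξ ∈ farQuotients r A, |ξ - T' / T| ≤ ρ := by
  have hr : 0 < r := hδ.trans_le hδr
  have hTpos : 0 < |T| := by linarith
  obtain ⟨x, hx, y, hy, z, hz, v, hv, hclose, hyv⟩ :=
    h.exists_abs_mul_sub_mul_lt hδ hs1 hL hT hT' hT2 hTT' (by linarith) hδr hrs
  have hyvpos : 0 < |y - v| := hr.trans_le hyv
  refine ⟨(x - z) / (y - v), ⟨x, hx, z, hz, y, hy, v, hv, hyv, rfl⟩, ?_⟩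
  have hT0 : T ≠ 0 := abs_pos.1 hTpos
  have hyv0 : y - v ≠ 0 := abs_pos.1 hyvpos
  rw [show (x - z) / (y - v) - T' / T = (T * (x - z) - T' * (y - v)) / (T * (y - v)) by field_simp,
    abs_div, abs_mul, div_le_iff₀ (by positivity)]
  have hρ0 : 0 ≤ ρ := nonneg_of_mul_nonneg_left (hδ.le.trans hρ) (by positivity)
  calc |T * (x - z) - T' * (y - v)| ≤ 2 * (ρ * r ^ 2) := by linarith
    _ = ρ * (2 * r * r) := by ring
    _ ≤ ρ * (|T| * |y - v|) := by gcongr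

lemma IsPivot.abs_sub_le_one (h : IsPivot δ s L A) {x y : ℝ} (hx : x ∈ A) (hy : y ∈ A) :
    |x - y| ≤ 1 :=
  abs_sub_le_iff.2 ⟨by linarith [h.le_one x hx, h.nonneg y hy],
    by linarith [h.le_one y hy, h.nonneg x hx]⟩

lemma IsPivot.exists_mem_farQuotients_abs_sub_half_le (h : IsPivot δ s L A) (hδ : 0 < δ)
    (hs1 : s < 1) (hL : 0 ≤ L) {r ρ : ℝ} (hδr : δ ≤ r) (hrs : 4 * L ^ 4 * r ^ s < 1)
    (hρ : δ ≤ ρ * r ^ 2) {ξ e : ℝ} (hξ : ξ ∈ farQuotients r A) (hξ3 : |ξ| ≤ 3)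
    (he : e = 0 ∨ e = 1) : ∃ ξ' ∈ farQuotients r A, |ξ' - (ξ + e) / 2| ≤ ρ := by
  obtain ⟨x, hx, y, hy, z, hz, w, hw, hzw, rfl⟩ := hξ
  have hzwpos : 0 < |z - w| := by linarith
  have hzw0 : z - w ≠ 0 := abs_pos.1 hzwpos
  have hT : |z - w + z - w| = 2 * |z - w| := by
    rw [show z - w + z - w = 2 * (z - w) by ring, abs_mul, abs_two]
  rw [abs_div, div_le_iff₀ hzwpos] at hξ3
  have hmem : ∀ {a b c d}, a ∈ A → b ∈ A → c ∈ A → d ∈ A → a - b + c - d ∈ A - A + A - A :=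
    fun ha hb hc hd => Finset.sub_mem_sub (Finset.add_mem_add (Finset.sub_mem_sub ha hb) hc) hd
  obtain ⟨T', hT', hquot, hTT'⟩ : ∃ T' ∈ A - A + A - A,
      T' / (z - w + z - w) = ((x - y) / (z - w) + e) / 2 ∧ |T'| ≤ 4 * |z - w| := by
    rw [show z - w + z - w = 2 * (z - w) by ring]
    rcases he with rfl | rfl
    · refine ⟨x - y + z - z, hmem hx hy hz hz, by field_simp; ring, ?_⟩
      rw [add_sub_cancel_right]
      linarith
    · refine ⟨x - y + z - w, hmem hx hy hz hw, by field_simp; ring, ?_⟩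
      rw [add_sub_assoc]
      linarith [abs_add_le (x - y) (z - w)]
  rw [← hquot]
  exact h.exists_mem_farQuotients_abs_sub_div_le hδ hs1 hL (hmem hz hw hz hw) hT'
    (by linarith [h.abs_sub_le_one hz hw]) (by linarith) (by linarith) hδr hrs hρ

lemma IsPivot.zero_mem_farQuotients (h : IsPivot δ s L A) (hL : 0 ≤ L) {r : ℝ}
    (hδr : δ ≤ r) (hr : 0 ≤ r) (hrs : L * r ^ s < 1) : 0 ∈ farQuotients r A := by
  obtain ⟨x, hx⟩ := h.nonempty
  suffices ∃ z ∈ A, ∃ w ∈ A, r ≤ |z - w| by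
    obtain ⟨z, hz, w, hw, hzw⟩ := this
    exact ⟨x, hx, x, hx, z, hz, w, hw, hzw, by rw [sub_self, zero_div]⟩
  by_contra! hclose
  have hcard := h.frostman.card_le_of_abs_sub_le hL subset_rfl hδr hr
    fun x hx y hy => (hclose x hx y hy).le
  have hA : (0 : ℝ) < A.card := Nat.cast_pos.2 h.nonempty.card_pos
  exact hcard.not_gt (mul_lt_of_lt_one_left hA hrs)

/-- The far quotients are nearly closed under `ξ ↦ ξ / 2` and `ξ ↦ (ξ + 1) / 2`, which generate the
binary expansions of the points of `[0, 1]` from `0`. -/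
lemma IsPivot.exists_mem_farQuotients_abs_sub_le (h : IsPivot δ s L A) (hδ : 0 < δ)
    (hs1 : s < 1) (hL : 1 ≤ L) {r ρ : ℝ} (hδr : δ ≤ r) (hrs : 4 * L ^ 4 * r ^ s < 1)
    (hρ : δ ≤ ρ * r ^ 2) (hρ2 : ρ ≤ 1 / 2) (m : ℕ) :
    ∀ x ∈ Set.Icc (0 : ℝ) 1, ∃ ξ ∈ farQuotients r A, |ξ - x| ≤ 2 * ρ + (1 / 2) ^ m := by
  have hL0 : 0 ≤ L := by linarith
  have hr : 0 < r := hδ.trans_le hδr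
  have hρ0 : 0 < ρ := pos_of_mul_pos_left (hδ.trans_le hρ) (by positivity)
  induction m with
  | zero =>
    intro x hx
    refine ⟨0, h.zero_mem_farQuotients hL0 hδr hr.le (lt_of_le_of_lt ?_ hrs), ?_⟩
    · gcongr
      nlinarith [le_self_pow₀ hL (four_ne_zero)]
    · rw [zero_sub, abs_neg, abs_of_nonneg hx.1, pow_zero]
      linarith [hx.2]
  | succ m ih =>
    intro x hx
    obtain ⟨e, he, hex⟩ : ∃ e : ℝ, (e = 0 ∨ e = 1) ∧ 2 * x - e ∈ Set.Icc (0 : ℝ) 1 := by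
      rcases le_total x (1 / 2) with hx2 | hx2
      · exact ⟨0, .inl rfl, by linarith [hx.1], by linarith⟩
      · exact ⟨1, .inr rfl, by linarith, by linarith [hx.2]⟩
    obtain ⟨ξ, hξ, hξx⟩ := ih _ hex
    have hpow : (1 / 2 : ℝ) ^ m ≤ 1 := pow_le_one₀ (by norm_num) (by norm_num)
    obtain ⟨hlow, hupp⟩ := abs_le.1 hξx
    obtain ⟨ξ', hξ', hξ'ξ⟩ := h.exists_mem_farQuotients_abs_sub_half_le hδ hs1 hL0 hδr hrs hρ hξ
      (abs_le.2 ⟨by linarith [hex.1], by linarith [hex.2]⟩) he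
    obtain ⟨hlow', hupp'⟩ := abs_le.1 hξ'ξ
    refine ⟨ξ', hξ', abs_le.2 ?_⟩
    rw [pow_succ]
    constructor <;> linarith

lemma sq_card_le_card_image_mul_card_filter {ι β : Type*} [DecidableEq β] (S : Finset ι)
    (f : ι → β) :
    S.card ^ 2 ≤ (S.image f).card * ((S ×ˢ S).filter fun p => f p.1 = f p.2).card := by
  have hpairs : ((S ×ˢ S).filter fun p => f p.1 = f p.2).card =
      ∑ b ∈ S.image f, (S.filter fun i => f i = b).card ^ 2 := by
    rw [Finset.card_eq_sum_card_fiberwise (f := fun p => f p.1) (t := S.image f) fun p hp =>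
      Finset.mem_image_of_mem f (Finset.mem_product.1 (Finset.mem_filter.1 hp).1).1]
    refine Finset.sum_congr rfl fun b _ => ?_
    rw [sq, ← Finset.card_product]
    congr 1
    ext p
    simp only [Finset.mem_filter, Finset.mem_product]
    aesop
  rw [hpairs, Finset.card_eq_sum_card_image f S]
  exact sq_sum_le_card_mul_sum_sq

/-- The quadruples `((a, b), (c, d))` in `A` whose difference quotient `(a - c) / (b - d)` is close
to `x`, in the form `|(a - c) - x (b - d)| ≤ η` that also makes sense for `b = d`. -/
noncomputable def slopeQuadruples (η x : ℝ) (A : Finset ℝ) : Finset ((ℝ × ℝ) × (ℝ × ℝ)) :=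
  ((A ×ˢ A) ×ˢ (A ×ˢ A)).filter fun p => |(p.1.1 - p.2.1) - x * (p.1.2 - p.2.2)| ≤ η

lemma abs_sub_sub_mul_sub_le {a b c d p q r x e : ℝ} (hr : 0 < r) (hq : r ≤ |q|)
    (hclose : |q * a - q * c - (p * b - p * d)| ≤ e) (hbd : |b - d| ≤ 1) :
    |(a - c) - x * (b - d)| ≤ e / r + |p / q - x| := by
  have hq0 : q ≠ 0 := abs_pos.1 (hr.trans_le hq)
  have hslope : |(a - c) - p / q * (b - d)| ≤ e / r := by
    rw [le_div_iff₀ hr]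
    calc |(a - c) - p / q * (b - d)| * r ≤ |(a - c) - p / q * (b - d)| * |q| := by gcongr
      _ = |q * a - q * c - (p * b - p * d)| := by
        rw [← abs_mul]
        congr 1
        field_simp
      _ ≤ e := hclose
  calc |(a - c) - x * (b - d)| = |((a - c) - p / q * (b - d)) + (p / q - x) * (b - d)| := by
        congr 1
        ring
    _ ≤ |(a - c) - p / q * (b - d)| + |p / q - x| * |b - d| := by
        rw [← abs_mul]
        exact abs_add_le _ _
    _ ≤ e / r + |p / q - x| :=
        add_le_add hslope (mul_le_of_le_one_right (abs_nonneg _) hbd)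

lemma IsPivot.card_pow_three_le (h : IsPivot δ s L A) (hδ : 0 < δ) (hδ1 : δ ≤ 1) {r η x ξ : ℝ}
    (hr : 0 < r) (hξ : ξ ∈ farQuotients r A) (hη : 2 * δ / r + |ξ - x| ≤ η) :
    (A.card : ℝ) ^ 3 ≤ L * (slopeQuadruples η x A).card := by
  obtain ⟨t, ht, u, hu, z, hz, w, hw, hzw, rfl⟩ := hξ
  set f : ℝ × ℝ → ℤ := fun p => ⌊(z - w) * p.1 / δ⌋ - ⌊(t - u) * p.2 / δ⌋
  have hsub : ∀ {a b}, a ∈ A → b ∈ A → a - b ∈ A - A + A - A := fun {a b} ha hb => by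
    have := Finset.sub_mem_sub (Finset.add_mem_add (Finset.sub_mem_sub ha hb) ha) ha
    rwa [add_sub_cancel_right] at this
  have himage : (((A ×ˢ A).image f).card : ℝ) ≤ L * A.card := by
    rw [← image_sub_image_eq_image_product A A (fun x => ⌊(z - w) * x / δ⌋)
      (fun x => ⌊(t - u) * x / δ⌋)]
    have := h.card_dilateCells_sub_le _ (hsub hz hw) _ (hsub ht hu) 1 hδ1 (h.abs_sub_le_one hz hw)
      (h.abs_sub_le_one ht hu)
    rwa [one_rpow, mul_one] at this
  have hcoll : ((A ×ˢ A) ×ˢ (A ×ˢ A)).filter (fun p => f p.1 = f p.2) ⊆ slopeQuadruples η x A := by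
    refine Finset.monotone_filter_right _ fun ⟨⟨a, b⟩, ⟨c, d⟩⟩ hp hf => ?_
    simp only [Finset.mem_product] at hp
    have hclose := abs_sub_sub_sub_lt_of_floor_div_sub_eq (x := (z - w) * a)
      (y := (z - w) * c) (z := (t - u) * b) (w := (t - u) * d) hδ (by simp only [f] at hf; lia)
    exact (abs_sub_sub_mul_sub_le hr hzw hclose.le (h.abs_sub_le_one hp.1.2 hp.2.2)).trans hη
  have hN : (0 : ℝ) < A.card := Nat.cast_pos.2 h.nonempty.card_pos
  refine le_of_mul_le_mul_left ?_ hN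
  calc (A.card : ℝ) * (A.card : ℝ) ^ 3 = ((A ×ˢ A).card ^ 2 : ℕ) := by
        rw [Finset.card_product]
        push_cast
        ring
    _ ≤ (((A ×ˢ A).image f).card * (slopeQuadruples η x A).card : ℕ) :=
        Nat.cast_le.2 ((sq_card_le_card_image_mul_card_filter _ f).trans (by gcongr))
    _ ≤ L * A.card * (slopeQuadruples η x A).card := by
        rw [Nat.cast_mul]
        gcongr
    _ = A.card * (L * (slopeQuadruples η x A).card) := by ring

lemma IsFrostman.card_filter_slopeQuadruples_le {C : ℝ} (hA : IsFrostman δ s C A) (hδ : 0 ≤ δ)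
    (hC : 0 ≤ C) {η θ x : ℝ} (hη : δ ≤ 2 * η) (hθ : δ ≤ 2 * θ) :
    (((slopeQuadruples η x A).filter fun p => |p.1.2 - p.2.2| ≤ θ).card : ℝ) ≤
      C ^ 2 * ((2 * η) ^ s * (2 * θ) ^ s) * A.card ^ 4 := by
  set F := (slopeQuadruples η x A).filter fun p => |p.1.2 - p.2.2| ≤ θ
  have hη0 : 0 ≤ 2 * η := hδ.trans hη
  have hθ0 : 0 ≤ 2 * θ := hδ.trans hθ
  have hmem : ∀ p ∈ F, (p.1 ∈ A ×ˢ A ∧ p.2 ∈ A ×ˢ A) ∧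
      |(p.1.1 - p.2.1) - x * (p.1.2 - p.2.2)| ≤ η ∧ |p.1.2 - p.2.2| ≤ θ := fun p hp => by
    obtain ⟨hp, hpθ⟩ := Finset.mem_filter.1 hp
    obtain ⟨hp, hpη⟩ := Finset.mem_filter.1 hp
    exact ⟨Finset.mem_product.1 hp, hpη, hpθ⟩
  have hfibre : ∀ p₀ ∈ F, ((F.filter fun p => p.2 = p₀.2).card : ℝ) ≤
      C * (2 * η / |1|) ^ s * A.card * (C * (2 * θ) ^ s * A.card) := fun p₀ _ => by
    have hinj : Set.InjOn Prod.fst (F.filter fun p => p.2 = p₀.2 : Set ((ℝ × ℝ) × (ℝ × ℝ))) :=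
      fun p hp p' hp' h =>
        Prod.ext h ((Finset.mem_filter.1 hp).2.trans (Finset.mem_filter.1 hp').2.symm)
    rw [← Finset.card_image_of_injOn hinj]
    refine hA.card_le_of_abs_mul_sub_mul_le hδ hC (t' := x) (Finset.image_subset_iff.2 fun p hp =>
      (hmem p (Finset.mem_filter.1 hp).1).1.1) one_ne_zero (by simpa using hη) hθ ?_ ?_
    · simp only [Finset.forall_mem_image, Finset.mem_filter]
      rintro p ⟨hp, hp₀⟩ p' ⟨hp', hp₀'⟩
      have := (abs_sub _ _).trans (add_le_add (hmem p hp).2.1 (hmem p' hp').2.1)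
      rw [hp₀, hp₀', ← two_mul] at this
      refine (congr_arg abs ?_).trans_le this
      ring
    · simp only [Finset.forall_mem_image, Finset.mem_filter]
      rintro p ⟨hp, hp₀⟩ p' ⟨hp', hp₀'⟩
      have := (abs_sub _ _).trans (add_le_add (hmem p hp).2.2 (hmem p' hp').2.2)
      rwa [hp₀, hp₀', sub_sub_sub_cancel_right, ← two_mul] at this
  have hsnd : ((F.image Prod.snd).card : ℝ) ≤ (A.card : ℝ) ^ 2 := by
    rw [sq, ← Nat.cast_mul, ← Finset.card_product]
    exact Nat.cast_le.2 (Finset.card_le_card (Finset.image_subset_iff.2 fun p hp =>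
      (hmem p hp).1.2))
  calc (F.card : ℝ)
      ≤ C * (2 * η / |1|) ^ s * A.card * (C * (2 * θ) ^ s * A.card) * (F.image Prod.snd).card :=
        card_le_mul_card_image_of_fibre_le hfibre
    _ ≤ C * (2 * η / |1|) ^ s * A.card * (C * (2 * θ) ^ s * A.card) * A.card ^ 2 := by
        rw [abs_one, div_one]
        gcongr
    _ = C ^ 2 * ((2 * η) ^ s * (2 * θ) ^ s) * A.card ^ 4 := by
        rw [abs_one, div_one]
        ring

lemma card_filter_abs_sub_mul_mul_le {ρ η θ : ℝ} (hρ : 0 < ρ) (hη : 0 ≤ η) (hθ : 0 < θ)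
    (K : Finset ℤ) {u v : ℝ} (hv : θ < |v|) :
    ((K.filter fun k : ℤ => |u - k * ρ * v| ≤ η).card : ℝ) ≤ 2 * η / (ρ * θ) + 2 := by
  rcases (K.filter fun k : ℤ => |u - k * ρ * v| ≤ η).eq_empty_or_nonempty with hK | hK
  · rw [hK, Finset.card_empty, Nat.cast_zero]
    positivity
  refine le_trans (card_lt_of_forall_abs_sub_lt hK (c := 2 * η / (ρ * θ) + 1) ?_).le (by linarith)
  intro k hk k' hk'
  have hk := (Finset.mem_filter.1 hk).2
  have hk' := (Finset.mem_filter.1 hk').2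
  refine lt_of_le_of_lt ?_ (lt_add_one _)
  rw [le_div_iff₀ (by positivity)]
  calc |(k : ℝ) - k'| * (ρ * θ) ≤ |(k : ℝ) - k'| * (ρ * |v|) := by gcongr
    _ = |(u - k' * ρ * v) - (u - k * ρ * v)| := by
        rw [← abs_of_pos hρ, ← abs_mul, ← abs_mul, abs_of_pos hρ]
        congr 1
        ring
    _ ≤ 2 * η := by linarith [abs_sub (u - k' * ρ * v) (u - k * ρ * v)]

lemma sum_card_filter_slopeQuadruples_le {ρ η θ : ℝ} (hρ : 0 < ρ) (hη : 0 ≤ η) (hθ : 0 < θ)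
    (K : Finset ℤ) :
    ∑ k ∈ K, (((slopeQuadruples η (k * ρ) A).filter fun p => ¬|p.1.2 - p.2.2| ≤ θ).card : ℝ) ≤
      A.card ^ 4 * (2 * η / (ρ * θ) + 2) := by
  set F := ((A ×ˢ A) ×ˢ (A ×ˢ A)).filter fun p => ¬|p.1.2 - p.2.2| ≤ θ
  have hF : (F.card : ℝ) ≤ A.card ^ 4 := by
    refine (Nat.cast_le.2 (Finset.card_filter_le _ _)).trans_eq ?_
    simp only [Finset.card_product, Nat.cast_mul]
    ring
  let close : ℤ → (ℝ × ℝ) × (ℝ × ℝ) → Prop := fun k p =>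
    |(p.1.1 - p.2.1) - k * ρ * (p.1.2 - p.2.2)| ≤ η
  calc ∑ k ∈ K, (((slopeQuadruples η (k * ρ) A).filter fun p => ¬|p.1.2 - p.2.2| ≤ θ).card : ℝ)
      = ((∑ k ∈ K, (F.bipartiteAbove close k).card : ℕ) : ℝ) := by
        rw [Nat.cast_sum]
        exact Finset.sum_congr rfl fun k _ => by
          rw [slopeQuadruples, Finset.filter_comm, Finset.bipartiteAbove]
    _ = ∑ p ∈ F, ((K.bipartiteBelow close p).card : ℝ) := by
        rw [Finset.sum_card_bipartiteAbove_eq_sum_card_bipartiteBelow, Nat.cast_sum]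
    _ ≤ F.card • (2 * η / (ρ * θ) + 2) :=
        Finset.sum_le_card_nsmul _ _ _ fun p hp => card_filter_abs_sub_mul_mul_le hρ hη hθ K
          (not_le.1 (Finset.mem_filter.1 hp).2)
    _ ≤ A.card ^ 4 * (2 * η / (ρ * θ) + 2) := by
        rw [nsmul_eq_mul]
        gcongr

/-- A quadruple with `|b - d| > θ` determines its slope up to `η / θ`, so it is counted for few `k`;
the others are few by non-concentration. -/
lemma IsFrostman.sum_card_slopeQuadruples_le {C : ℝ} (hA : IsFrostman δ s C A) (hδ : 0 ≤ δ)
    (hC : 0 ≤ C) {η θ ρ : ℝ} (hη : δ ≤ 2 * η) (hθ : δ ≤ 2 * θ) (hρ : 0 < ρ) (hθ0 : 0 < θ)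
    (K : Finset ℤ) :
    ∑ k ∈ K, ((slopeQuadruples η (k * ρ) A).card : ℝ) ≤
      A.card ^ 4 * (K.card * (C ^ 2 * ((2 * η) ^ s * (2 * θ) ^ s)) +
        (2 * η / (ρ * θ) + 2)) := by
  have hsplit : ∀ k : ℤ, ((slopeQuadruples η (k * ρ) A).card : ℝ) =
      ((slopeQuadruples η (k * ρ) A).filter fun p => |p.1.2 - p.2.2| ≤ θ).card +
        ((slopeQuadruples η (k * ρ) A).filter fun p => ¬|p.1.2 - p.2.2| ≤ θ).card := fun k => by
    rw [← Nat.cast_add, Finset.card_filter_add_card_filter_not]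
  simp only [hsplit, Finset.sum_add_distrib, mul_add]
  rw [← mul_add _ (2 * η / (ρ * θ))]
  refine add_le_add ?_ (sum_card_filter_slopeQuadruples_le hρ (by linarith) hθ0 K)
  refine (Finset.sum_le_card_nsmul _ _ _ fun k _ =>
    hA.card_filter_slopeQuadruples_le hδ hC hη hθ).trans_eq ?_
  rw [nsmul_eq_mul]
  ring

lemma IsPivot.one_le_mul_add (h : IsPivot δ s L A) (hδ : 0 < δ) (hδ1 : δ ≤ 1) (hL : 0 ≤ L)
    {r η θ ρ : ℝ} (hr : 0 < r) (hη : δ ≤ 2 * η) (hθ : δ ≤ 2 * θ) (hρ : 0 < ρ)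
    (hdense : ∀ x ∈ Set.Icc (0 : ℝ) 1, ∃ ξ ∈ farQuotients r A, 2 * δ / r + |ξ - x| ≤ η) :
    1 ≤ L * A.card * (L ^ 2 * ((2 * η) ^ s * (2 * θ) ^ s) + (2 * η / (ρ * θ) + 2) * ρ) := by
  set K := Finset.Icc 0 ⌊1 / ρ⌋
  have hK : 1 ≤ K.card * ρ := by
    rw [← div_le_iff₀ hρ, Int.card_Icc, sub_zero, ← Int.cast_natCast, Int.toNat_of_nonneg
      (by positivity), Int.cast_add, Int.cast_one]
    exact (Int.lt_floor_add_one _).le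
  have hslopes : ∀ k ∈ K, (A.card : ℝ) ^ 3 ≤ L * (slopeQuadruples η (k * ρ) A).card :=
    fun k hk => by
      obtain ⟨hk0, hk1⟩ := Finset.mem_Icc.1 hk
      obtain ⟨ξ, hξ, hξη⟩ := hdense (k * ρ) ⟨mul_nonneg (Int.cast_nonneg hk0) hρ.le,
        (le_div_iff₀ hρ).1 (Int.le_floor.1 hk1)⟩
      exact h.card_pow_three_le hδ hδ1 hr hξ hξη
  have hsum := (Finset.card_nsmul_le_sum _ _ _ hslopes).trans_eq (Finset.mul_sum _ _ _).symm
  have hN : (0 : ℝ) < A.card := Nat.cast_pos.2 h.nonempty.card_pos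
  have hcoef : 0 ≤ 2 * η / (ρ * θ) + 2 := by
    have : 0 ≤ 2 * η := hδ.le.trans hη
    have : 0 ≤ θ := by linarith
    positivity
  have hK0 : (0 : ℝ) < K.card := pos_of_mul_pos_left (zero_lt_one.trans_le hK) hρ.le
  refine le_of_mul_le_mul_left ?_ (show 0 < K.card * (A.card : ℝ) ^ 3 by positivity)
  calc K.card * (A.card : ℝ) ^ 3 * 1
      ≤ L * ∑ k ∈ K, ((slopeQuadruples η (k * ρ) A).card : ℝ) := by
        rwa [mul_one, ← nsmul_eq_mul]
    _ ≤ L * (A.card ^ 4 * (K.card * (L ^ 2 * ((2 * η) ^ s * (2 * θ) ^ s)) +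
          (2 * η / (ρ * θ) + 2) * (K.card * ρ))) := by
        gcongr
        refine (h.frostman.sum_card_slopeQuadruples_le hδ.le hL hη hθ hρ (by linarith) K).trans ?_
        gcongr
        exact le_mul_of_one_le_right hcoef hK
    _ = _ := by ring

lemma div_add_two_mul_le {ρ θ : ℝ} (hρ : 0 < ρ) (hθ : 0 < θ) (hθ1 : θ ≤ 1) :
    (2 * (5 * ρ) / (ρ * θ) + 2) * ρ ≤ 12 * (ρ / θ) :=
  calc (2 * (5 * ρ) / (ρ * θ) + 2) * ρ = 10 * (ρ / θ) + 2 * (ρ / 1) := by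
        field_simp
        ring
    _ ≤ 10 * (ρ / θ) + 2 * (ρ / θ) := by gcongr
    _ = 12 * (ρ / θ) := by ring

/-- With the threshold `θ = δ ^ ((1 - s) / 2)` for `|b - d|`, the exponents balance so that
`ρ / θ = δ ^ s * δ ^ ((1 - s) / 4)` and `ρ * θ = δ * δ ^ ((1 - s) / 4)`. -/
lemma IsPivot.one_le_mul_rpow (h : IsPivot δ s L A) (hδ : 0 < δ) (hδ1 : δ ≤ 1) (hs0 : 0 < s)
    (hs1 : s < 1) (hL : 1 ≤ L) {r ρ : ℝ} (hr : 0 < r) (hρ : ρ = δ ^ (1 - (1 - s) / 4))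
    (hdense : ∀ x ∈ Set.Icc (0 : ℝ) 1, ∃ ξ ∈ farQuotients r A, 2 * δ / r + |ξ - x| ≤ 5 * ρ) :
    1 ≤ 32 * L ^ 4 * (δ ^ ((1 - s) / 4)) ^ s := by
  set c := (1 - s) / 4 with hc
  set θ := δ ^ (2 * c)
  have hθ0 : 0 < θ := rpow_pos_of_pos hδ _
  have hρ0 : 0 < ρ := hρ ▸ rpow_pos_of_pos hδ _
  have hδρ : δ ≤ ρ := hρ ▸ self_le_rpow_of_le_one hδ.le hδ1 (by linarith)
  have hδθ : δ ≤ θ := self_le_rpow_of_le_one hδ.le hδ1 (by linarith)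
  have hρθ : ρ * θ = δ * δ ^ c := by
    rw [hρ, ← rpow_add hδ, ← rpow_one_add' hδ.le (by linarith)]
    ring_nf
  have hρdivθ : ρ / θ = δ ^ s * δ ^ c := by
    rw [hρ, ← rpow_sub hδ, ← rpow_add hδ]
    congr 1
    linarith
  have hnear : (2 * (5 * ρ)) ^ s * (2 * θ) ^ s ≤ 20 * (δ ^ s * (δ ^ c) ^ s) := by
    rw [← mul_rpow hδ.le (by positivity), ← hρθ, ← mul_rpow (by positivity) (by positivity),
      show 2 * (5 * ρ) * (2 * θ) = 20 * (ρ * θ) by ring]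
    exact mul_rpow_le_mul_rpow (by norm_num) (by positivity) hs1.le
  have hfar : (2 * (5 * ρ) / (ρ * θ) + 2) * ρ ≤ 12 * (δ ^ s * (δ ^ c) ^ s) :=
    calc (2 * (5 * ρ) / (ρ * θ) + 2) * ρ ≤ 12 * (ρ / θ) :=
          div_add_two_mul_le hρ0 hθ0 (rpow_le_one hδ.le hδ1 (by linarith))
      _ ≤ 12 * (δ ^ s * (δ ^ c) ^ s) := by
          rw [hρdivθ]
          gcongr
          exact self_le_rpow_of_le_one (by positivity) (rpow_le_one hδ.le hδ1 (by linarith)) hs1.le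
  calc 1 ≤ L * A.card * (L ^ 2 * ((2 * (5 * ρ)) ^ s * (2 * θ) ^ s) +
        (2 * (5 * ρ) / (ρ * θ) + 2) * ρ) :=
        h.one_le_mul_add hδ hδ1 (by linarith) hr (by linarith) (by linarith) hρ0 hdense
    _ ≤ L * A.card * (L ^ 2 * (20 * (δ ^ s * (δ ^ c) ^ s)) +
        L ^ 2 * (12 * (δ ^ s * (δ ^ c) ^ s))) := by
        grw [hnear, hfar]
        gcongr _ * (_ + ?_)
        exact le_mul_of_one_le_left (by positivity) (one_le_pow₀ hL)
    _ = 32 * L ^ 3 * (A.card * δ ^ s) * (δ ^ c) ^ s := by ring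
    _ ≤ 32 * L ^ 3 * L * (δ ^ c) ^ s := by
        gcongr
        exact h.card_mul_rpow_le
    _ = 32 * L ^ 4 * (δ ^ c) ^ s := by ring

theorem IsPivot.inv_pow_lt_rpow (h : IsPivot δ s L A) (hδ : 0 < δ) (hδ1 : δ ≤ 1) (hs0 : 0 < s)
    (hs1 : s < 1) (hL : 1000 ≤ L) {q : ℕ} (hq : 1 ≤ s * q) :
    (L ^ (10 * q))⁻¹ < δ ^ ((1 - s) / 4) := by
  by_contra! hδL
  have hL0 : 0 < L := by linarith
  have hL1 : 1 ≤ L := by linarith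
  set r := (L ^ (5 * q))⁻¹ with hr
  set ρ := δ ^ (1 - (1 - s) / 4) with hρ
  have hr0 : 0 < r := by positivity
  have hr1 : r ≤ 1 := inv_le_one_of_one_le₀ (one_le_pow₀ hL1)
  have hrs : r ^ s ≤ (L ^ 5)⁻¹ := inv_pow_mul_rpow_le hL1 5 hq
  have hδr : δ ^ ((1 - s) / 4) ≤ r ^ 2 := by
    rwa [hr, inv_pow, ← pow_mul, show 5 * q * 2 = 10 * q by ring]
  have hρ0 : 0 < ρ := rpow_pos_of_pos hδ _
  have hδρ : δ ≤ ρ * r ^ 2 :=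
    calc δ = ρ * δ ^ ((1 - s) / 4) := by rw [← rpow_add hδ, sub_add_cancel, rpow_one]
      _ ≤ ρ * r ^ 2 := by gcongr
  have hr2 : r ^ 2 ≤ r := pow_le_of_le_one hr0.le hr1 two_ne_zero
  have hL5 : 32 * L ^ 4 * (L ^ 5)⁻¹ < 1 :=
    calc 32 * L ^ 4 * (L ^ 5)⁻¹ = 32 / L := by field_simp
      _ < 1 := (div_lt_one hL0).2 (by linarith)
  have hr_half : r ≤ 1 / 2 := by
    have := (self_le_rpow_of_le_one hr0.le hr1 hs1.le).trans hrs
    nlinarith [one_le_pow₀ hL1 (n := 4), inv_pos.2 (pow_pos hL0 5)]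
  have hρr : ρ ≤ r := (rpow_le_rpow_of_exponent_ge hδ hδ1 (by linarith)).trans (hδr.trans hr2)
  obtain ⟨m, hm⟩ := exists_pow_lt_of_lt_one hρ0 (show (1 / 2 : ℝ) < 1 by norm_num)
  have hdense : ∀ x ∈ Set.Icc (0 : ℝ) 1, ∃ ξ ∈ farQuotients r A, 2 * δ / r + |ξ - x| ≤ 5 * ρ :=
    fun x hx => by
      obtain ⟨ξ, hξ, hξx⟩ := h.exists_mem_farQuotients_abs_sub_le hδ hs1 hL1
        (hδρ.trans ((mul_le_of_le_one_left (by positivity) (hρr.trans hr1)).trans hr2))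
        (by nlinarith [pow_pos hL0 4]) hδρ (hρr.trans hr_half) m x hx
      have : δ / r ≤ ρ := (div_le_iff₀ hr0).2 (hδρ.trans (by gcongr))
      exact ⟨ξ, hξ, by rw [mul_div_assoc]; linarith⟩
  refine (h.one_le_mul_rpow hδ hδ1 hs0 hs1 hL1 hr0 hρ hdense).not_gt ?_
  calc 32 * L ^ 4 * (δ ^ ((1 - s) / 4)) ^ s ≤ 32 * L ^ 4 * (L ^ 5)⁻¹ := by
        gcongr
        exact (rpow_le_rpow (by positivity) (hδr.trans hr2) hs0.le).trans hrs
    _ < 1 := hL5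

end QuotientSet

section SumProduct

variable {δ s l r C : ℝ} {A B : Finset ℝ} {G : Finset (ℝ × ℝ)}

theorem HasSmallDifferences.inv_pow_lt_rpow {L : ℝ} (h : HasSmallDifferences δ s L A) (hδ : 0 < δ)
    (hδ1 : δ ≤ 1) (hs0 : 0 < s) (hs1 : s < 1) (hL : 1000 ≤ L) {q : ℕ} (hq : 1 ≤ s * q) :
    (L ^ ((16 * q + 123) * (10 * q)))⁻¹ < δ ^ ((1 - s) / 4) := by
  by_contra! hδL
  have hL1 : 1 ≤ L := by linarith
  have hδq : δ ≤ (L ^ (2 * q))⁻¹ :=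
    calc δ ≤ δ ^ ((1 - s) / 4) := self_le_rpow_of_le_one hδ.le hδ1 (by linarith)
      _ ≤ (L ^ ((16 * q + 123) * (10 * q)))⁻¹ := hδL
      _ ≤ (L ^ (2 * q))⁻¹ := by
        gcongr ?_⁻¹
        exact pow_le_pow_right₀ hL1 (by nlinarith)
  obtain ⟨A', hA'⟩ := h.exists_isPivot hδ hs1 hL hq hδq
  have := hA'.inv_pow_lt_rpow hδ hδ1 hs0 hs1 (hL.trans (le_self_pow₀ hL1 (by lia))) hq
  rw [← pow_mul] at this
  exact this.not_ge hδL

lemma IsFrostman.mono_const (hA : IsFrostman δ s C A) (hδ : 0 ≤ δ) {C' : ℝ} (hCC' : C ≤ C') :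
    IsFrostman δ s C' A := fun x l hl =>
  (hA x l hl).trans (by have := hδ.trans hl; gcongr)

lemma card_le_card_filter_add (hG : G ⊆ A ×ˢ A) (p : ℝ → Prop) :
    G.card ≤ (G.filter fun x => x ∈ (A.filter p) ×ˢ (A.filter p)).card +
      2 * (A.card * (A.filter fun x => ¬p x).card) := by
  have hsub : G ⊆ (G.filter fun x => x ∈ (A.filter p) ×ˢ (A.filter p)) ∪
      (A.filter (fun x => ¬p x) ×ˢ A ∪ A ×ˢ A.filter fun x => ¬p x) := fun x hx => by
    have := Finset.mem_product.1 (hG hx)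
    simp only [Finset.mem_union, Finset.mem_filter, Finset.mem_product]
    tauto
  refine (Finset.card_le_card hsub).trans ((Finset.card_union_le _ _).trans ?_)
  refine Nat.add_le_add_left ((Finset.card_union_le _ _).trans_eq ?_) _
  rw [Finset.card_product, Finset.card_product]
  ring

lemma IsFrostman.card_filter_not_le_le (hA : IsFrostman δ s C A) (hA0 : ∀ x ∈ A, 0 ≤ x)
    (hr : δ ≤ r) : ((A.filter fun x => ¬r ≤ x).card : ℝ) ≤ C * r ^ s * A.card := by
  refine le_trans (Nat.cast_le.2 (Finset.card_le_card ?_)) (hA 0 r hr)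
  refine Finset.monotone_filter_right _ fun x hx hxr => ?_
  rw [zero_add]
  exact ⟨hA0 x hx, (not_le.1 hxr).le⟩

lemma IsFrostman.card_le_two_mul_and_sq_card_le (hA : IsFrostman δ s l A) (hA0 : ∀ x ∈ A, 0 ≤ x)
    (hδr : δ ≤ r) (hl : 4 ≤ l) (hr : r ^ s ≤ (l ^ 3)⁻¹) (hG : G ⊆ A ×ˢ A)
    (hdense : (A.card : ℝ) ^ 2 ≤ l * G.card) :
    (A.card : ℝ) ≤ 2 * (A.filter (r ≤ ·)).card ∧ (A.card : ℝ) ^ 2 ≤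
      l ^ 2 * (G.filter fun p => p ∈ A.filter (r ≤ ·) ×ˢ A.filter (r ≤ ·)).card := by
  have hl0 : 0 < l := by linarith
  have hfew : l ^ 2 * ((A.filter fun x => ¬r ≤ x).card : ℝ) ≤ A.card :=
    calc l ^ 2 * ((A.filter fun x => ¬r ≤ x).card : ℝ) ≤ l ^ 2 * (l * r ^ s * A.card) := by
          gcongr
          exact hA.card_filter_not_le_le hA0 hδr
      _ ≤ l ^ 2 * (l * (l ^ 3)⁻¹ * A.card) := by gcongr
      _ = A.card := by field_simp
  have hsplit : ((A.filter (r ≤ ·)).card : ℝ) + (A.filter fun x => ¬r ≤ x).card = A.card := by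
    exact_mod_cast Finset.card_filter_add_card_filter_not (s := A) (r ≤ ·)
  have hpairs : (G.card : ℝ) ≤ (G.filter fun p => p ∈ A.filter (r ≤ ·) ×ˢ A.filter (r ≤ ·)).card +
      2 * (A.card * (A.filter fun x => ¬r ≤ x).card) := by
    exact_mod_cast card_le_card_filter_add hG (r ≤ ·)
  have hhalf : 2 * ((A.filter fun x => ¬r ≤ x).card : ℝ) ≤ A.card :=
    le_trans (mul_le_mul_of_nonneg_right (by nlinarith) (Nat.cast_nonneg _)) hfew
  refine ⟨by linarith, ?_⟩
  have hG' : (A.card : ℝ) ^ 2 * l ≤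
      l ^ 2 * (G.filter fun p => p ∈ A.filter (r ≤ ·) ×ˢ A.filter (r ≤ ·)).card +
        2 * (A.card : ℝ) ^ 2 :=
    calc (A.card : ℝ) ^ 2 * l ≤ l * (_ + _) * l := by grw [hdense, hpairs]
      _ = l ^ 2 * (G.filter fun p => p ∈ A.filter (r ≤ ·) ×ˢ A.filter (r ≤ ·)).card +
          2 * A.card * (l ^ 2 * (A.filter fun x => ¬r ≤ x).card) := by ring
      _ ≤ l ^ 2 * (G.filter fun p => p ∈ A.filter (r ≤ ·) ×ˢ A.filter (r ≤ ·)).card +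
          2 * A.card * A.card := by gcongr
      _ = _ := by ring
  nlinarith [sq_nonneg (A.card : ℝ)]

lemma le_pow_mul_pow_mul_of_mul_pow_three_le {D n N N' φ : ℝ} (hl : 1000 ≤ l) (hφ : 0 ≤ φ)
    (hn : 0 ≤ n) (hN : 0 < N) (hnN : n ≤ 2 * N) (hNN' : N ≤ 4 * l ^ 2 * N')
    (h : D * N ^ 3 ≤ 1024 * (l ^ 2) ^ 5 * φ ^ 3 * (8 * (l * n)) ^ 4) : D ≤ l ^ 19 * φ ^ 3 * N' := by
  have hl0 : 0 < l := by linarith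
  have hN' : 0 < N' := pos_of_mul_pos_right (hN.trans_le hNN') (by positivity)
  refine le_of_mul_le_mul_right ?_ (pow_pos hN 3)
  calc D * N ^ 3 ≤ 1024 * (l ^ 2) ^ 5 * φ ^ 3 * (8 * (l * (2 * N))) ^ 4 := by grw [h, hnN]
    _ = 2 ^ 26 * l ^ 14 * φ ^ 3 * N * N ^ 3 := by ring
    _ ≤ 2 ^ 26 * l ^ 14 * φ ^ 3 * (4 * l ^ 2 * N') * N ^ 3 := by gcongr
    _ = 2 ^ 28 * (l ^ 16 * φ ^ 3 * N') * N ^ 3 := by ring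
    _ ≤ l ^ 3 * (l ^ 16 * φ ^ 3 * N') * N ^ 3 := by
        gcongr
        exact (by norm_num : (2 : ℝ) ^ 28 ≤ 1000 ^ 3).trans (by gcongr)
    _ = l ^ 19 * φ ^ 3 * N' * N ^ 3 := by ring

lemma exists_subset_card_cells_sub_cells_le (hδ : 0 < δ) (hl : 1000 ≤ l) (hr : 0 < r)
    (hrB : ∀ x ∈ B, r ≤ x) (hsep : (B : Set ℝ).Pairwise fun x y => δ ≤ |x - y|) (hB : B.Nonempty)
    (hG : G ⊆ B ×ˢ B) (hdense : (B.card : ℝ) ^ 2 ≤ l ^ 2 * G.card) {a b φ n : ℝ} (ha : a ≠ 0)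
    (hb : b ≠ 0) (hφ : 3 ≤ φ) (hφa : 1 / (2 * |a| * r) + 2 ≤ φ) (hφb : 1 / (2 * |b| * r) + 2 ≤ φ)
    (hn : 0 ≤ n) (hnB : n ≤ 2 * B.card)
    (hsum : ((G.image fun p => ⌊p.1 / δ⌋ + ⌊p.2 / δ⌋).card : ℝ) ≤ 8 * (l * n))
    (hsq : ((G.image fun p => ⌊a * p.1 ^ 2 / δ⌋ + ⌊b * p.2 ^ 2 / δ⌋).card : ℝ) ≤ 8 * (l * n)) :
    ∃ A' ⊆ B, (B.card : ℝ) ≤ 4 * l ^ 2 * A'.card ∧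
      ((cells δ (fun x => x) A' - cells δ (fun x => x) A').card : ℝ) ≤ l ^ 19 * φ ^ 3 * A'.card ∧
      ((cells δ (fun x => a * x ^ 2) A' - cells δ (fun x => a * x ^ 2) A').card : ℝ) ≤
        l ^ 19 * φ ^ 3 * A'.card := by
  have hφ0 : 0 ≤ φ := by linarith
  obtain ⟨A', hA'B, hcard, hdiff⟩ := exists_subset_card_image_sub_image_le (Γ := ℤ)
    (pow_pos (by linarith : 0 < l) 2) hB hG (by rwa [← sq])
  have hB0 : (0 : ℝ) < B.card := Nat.cast_pos.2 hB.card_pos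
  have hfibre : ∀ z, ((B.filter fun x => ⌊x / δ⌋ = z).card : ℝ) ≤ φ := fun z =>
    (card_fibre_le_of_separated hδ hsep zero_le_one (fun x _ y _ hxy => by
      rw [one_mul]
      exact abs_sub_lt_of_floor_div_eq hδ hxy) z).trans (by linarith)
  have hfibre_sq : ∀ c ≠ 0, 1 / (2 * |c| * r) + 2 ≤ φ →
      ∀ z, ((B.filter fun x => ⌊c * x ^ 2 / δ⌋ = z).card : ℝ) ≤ φ := fun c hc hφc z =>
    (card_fibre_le_of_separated hδ hsep (by positivity) (fun x hx y hy =>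
      abs_sub_lt_of_floor_mul_sq_div_eq hδ hc hr (hrB x hx) (hrB y hy)) z).trans hφc
  rw [← pow_succ' (B.card : ℝ) 2] at hdiff
  exact ⟨A', hA'B, hcard,
    le_pow_mul_pow_mul_of_mul_pow_three_le hl hφ0 hn hB0 hnB hcard
      ((hdiff _ _ φ hfibre hfibre).trans (by gcongr)),
    le_pow_mul_pow_mul_of_mul_pow_three_le hl hφ0 hn hB0 hnB hcard
      ((hdiff _ _ φ (hfibre_sq a ha hφa) (hfibre_sq b hb hφb)).trans (by gcongr))⟩

lemma card_sqCells_sub_sqCells_le (hδ : 0 < δ) {a : ℝ} (ha : a ≠ 0) :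
    ((sqCells δ A - sqCells δ A).card : ℝ) ≤
      (1 / |a| + 3) * (cells δ (fun x => a * x ^ 2) A - cells δ (fun x => a * x ^ 2) A).card := by
  have := card_cells_mul_sub_cells_mul_le hδ (1 / (2 * a)) (fun x => a * x ^ 2)
    (fun x => a * x ^ 2) A A
  have hhalf : ∀ x : ℝ, 1 / (2 * a) * (a * x ^ 2) = x ^ 2 / 2 := fun x => by field_simp
  have hcoef : 2 * |1 / (2 * a)| = 1 / |a| := by
    rw [abs_div, abs_mul, abs_one, abs_two]
    field_simp
  simpa only [hhalf, hcoef] using this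

lemma one_div_mul_inv_pow_add_two_le {c : ℝ} (hl : 4 ≤ l) (hc : 1 ≤ l * |c|) (k : ℕ) :
    1 / (2 * |c| * (l ^ k)⁻¹) + 2 ≤ l ^ (k + 1) := by
  have hl0 : 0 < l := by linarith
  have hc0 : 0 < |c| := pos_of_mul_pos_right (zero_lt_one.trans_le hc) hl0.le
  calc 1 / (2 * |c| * (l ^ k)⁻¹) + 2 = l ^ k * (1 / |c| / 2) + 2 * 1 := by field_simp
    _ ≤ l ^ k * (l / 2) + 2 * l ^ k := by
        gcongr
        exacts [(div_le_iff₀ hc0).2 hc, one_le_pow₀ (by linarith)]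
    _ = l ^ k * (l / 2 + 2) := by ring
    _ ≤ l ^ (k + 1) := by
        rw [pow_succ]
        gcongr
        linarith

lemma card_image_floor_add_floor_le_of_subset (hδ : 0 < δ) {G' : Finset (ℝ × ℝ)} (hG' : G' ⊆ G)
    (u v : ℝ × ℝ → ℝ) {M : ℝ} (hM : (coverNum δ ((fun p => u p + v p) '' G) : ℝ) ≤ M) :
    ((G'.image fun p => ⌊u p / δ⌋ + ⌊v p / δ⌋).card : ℝ) ≤ 8 * M :=
  (Nat.cast_le.2 (Finset.card_le_card (Finset.image_subset_image hG'))).trans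
    ((card_image_floor_add_floor_le_coverNum hδ u v G).trans (by gcongr))

lemma exists_subset_card_cells_sub_cells_le_of_coverNum_le (hδ : 0 < δ) (hl : 1000 ≤ l) {q : ℕ}
    (hq : 1 ≤ s * q) (hδq : δ ≤ (l ^ (3 * q))⁻¹) (hA : IsFrostman δ s l A)
    (hA0 : ∀ x ∈ A, 0 ≤ x) (hsep : (A : Set ℝ).Pairwise fun x y => δ ≤ |x - y|)
    (hAne : A.Nonempty) (hG : G ⊆ A ×ˢ A) (hdense : (A.card : ℝ) ^ 2 ≤ l * G.card) {a b : ℝ}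
    (ha : 1 ≤ l * |a|) (hb : 1 ≤ l * |b|)
    (hsum : (coverNum δ ((fun p : ℝ × ℝ => p.1 + p.2) '' G) : ℝ) ≤ l * A.card)
    (hsq : (coverNum δ ((fun p : ℝ × ℝ => a * p.1 ^ 2 + b * p.2 ^ 2) '' G) : ℝ) ≤ l * A.card) :
    ∃ A' ⊆ A, (∀ x ∈ A', (l ^ (3 * q))⁻¹ ≤ x) ∧ (A.card : ℝ) ≤ l ^ 3 * A'.card ∧
      ((cells δ (fun x => x) A' - cells δ (fun x => x) A').card : ℝ) ≤
        l ^ (9 * q + 22) * A'.card ∧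
      ((cells δ (fun x => a * x ^ 2) A' - cells δ (fun x => a * x ^ 2) A').card : ℝ) ≤
        l ^ (9 * q + 22) * A'.card := by
  have hl0 : 0 < l := by linarith
  have hl1 : 1 ≤ l := by linarith
  have hl4 : 4 ≤ l := by linarith
  have hne : ∀ c : ℝ, 1 ≤ l * |c| → c ≠ 0 := fun c hc h => by norm_num [h] at hc
  set r := (l ^ (3 * q))⁻¹ with hr
  set B := A.filter (r ≤ ·)
  set G' := G.filter fun p => p ∈ B ×ˢ B
  have hBA : B ⊆ A := Finset.filter_subset _ _
  have hG'G : G' ⊆ G := Finset.filter_subset _ _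
  obtain ⟨hAB, hAG⟩ := hA.card_le_two_mul_and_sq_card_le hA0 hδq (by linarith)
    (inv_pow_mul_rpow_le hl1 3 hq) hG hdense
  have hA0 : (0 : ℝ) < A.card := Nat.cast_pos.2 hAne.card_pos
  have hB : B.Nonempty := Finset.card_pos.1 (Nat.cast_pos.1 (by linarith : (0 : ℝ) < B.card))
  obtain ⟨A', hA'B, hBA', hdiff, hsqdiff⟩ := exists_subset_card_cells_sub_cells_le hδ hl
    (by positivity) (fun x hx => (Finset.mem_filter.1 hx).2)
    (hsep.mono (Finset.coe_subset.2 hBA)) hB (fun p hp => (Finset.mem_filter.1 hp).2)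
    (hAG.trans' (by gcongr)) (hne a ha) (hne b hb)
    ((by linarith : 3 ≤ l).trans (le_self_pow₀ hl1 (by lia)))
    (one_div_mul_inv_pow_add_two_le hl4 ha _) (one_div_mul_inv_pow_add_two_le hl4 hb _) hA0.le hAB
    (card_image_floor_add_floor_le_of_subset hδ hG'G Prod.fst Prod.snd hsum)
    (card_image_floor_add_floor_le_of_subset hδ hG'G (fun p : ℝ × ℝ => a * p.1 ^ 2)
      (fun p : ℝ × ℝ => b * p.2 ^ 2) hsq)
  have hexp : l ^ 19 * (l ^ (3 * q + 1)) ^ 3 * A'.card = l ^ (9 * q + 22) * A'.card := by ring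
  refine ⟨A', hA'B.trans hBA, fun x hx => (Finset.mem_filter.1 (hA'B hx)).2, ?_, ?_, ?_⟩
  · calc (A.card : ℝ) ≤ 2 * (4 * l ^ 2 * A'.card) := by grw [hAB, hBA']
      _ = 8 * l ^ 2 * A'.card := by ring
      _ ≤ l * l ^ 2 * A'.card := by
        gcongr
        linarith
      _ = l ^ 3 * A'.card := by ring
  · exact hdiff.trans_eq hexp
  · exact hsqdiff.trans_eq hexp

theorem exists_hasSmallDifferences (hδ : 0 < δ) (hl : 1000 ≤ l) {q : ℕ} (hq : 1 ≤ s * q)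
    (hδq : δ ≤ (l ^ (3 * q))⁻¹) (hA : IsFrostman δ s l A) (hA01 : (A : Set ℝ) ⊆ Set.Icc 0 1)
    (hsep : (A : Set ℝ).Pairwise fun x y => δ ≤ |x - y|) (hAne : A.Nonempty)
    (hcard : A.card * δ ^ s ≤ l) (hG : G ⊆ A ×ˢ A) (hdense : (A.card : ℝ) ^ 2 ≤ l * G.card)
    {a b : ℝ} (ha : 1 ≤ l * |a|) (hb : 1 ≤ l * |b|)
    (hsum : (coverNum δ ((fun p : ℝ × ℝ => p.1 + p.2) '' G) : ℝ) ≤ l * A.card)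
    (hsq : (coverNum δ ((fun p : ℝ × ℝ => a * p.1 ^ 2 + b * p.2 ^ 2) '' G) : ℝ) ≤ l * A.card) :
    ∃ A', HasSmallDifferences δ s (l ^ (9 * q + 24)) A' := by
  have hl0 : 0 < l := by linarith
  have hl1 : 1 ≤ l := by linarith
  obtain ⟨A', hA'A, hrA', hAA', hdiff, hsqdiff⟩ :=
    exists_subset_card_cells_sub_cells_le_of_coverNum_le hδ hl hq hδq hA
      (fun x hx => (hA01 hx).1) hsep hAne hG hdense ha hb hsum hsq
  have hpow : ∀ {k}, k ≤ 9 * q + 24 → l ^ k ≤ l ^ (9 * q + 24) := pow_le_pow_right₀ hl1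
  have ha0 : 0 < |a| := pos_of_mul_pos_right (zero_lt_one.trans_le ha) hl0.le
  have hainv : 1 / |a| + 3 ≤ l ^ 2 := by
    have := (div_le_iff₀ ha0).2 ha
    nlinarith
  refine ⟨A', ?_, fun x hx => ?_, fun x hx => (hA01 (hA'A hx)).2,
    hsep.mono (Finset.coe_subset.2 hA'A), ?_, ?_, ?_, ?_⟩
  · refine Finset.card_pos.1 (Nat.cast_pos.1 (pos_of_mul_pos_right ?_ (pow_nonneg hl0.le 3)))
    exact (Nat.cast_pos.2 hAne.card_pos).trans_le hAA'
  · rw [one_div]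
    exact (inv_anti₀ (by positivity) (hpow (by lia))).trans (hrA' x hx)
  · refine (hA.mono hδ.le hl0.le hA'A hAA').mono_const hδ.le ?_
    rw [← pow_succ']
    exact hpow (by lia)
  · calc A'.card * δ ^ s ≤ A.card * δ ^ s := by gcongr
      _ ≤ l := hcard
      _ ≤ l ^ (9 * q + 24) := le_self_pow₀ hl1 (by lia)
  · exact hdiff.trans (mul_le_mul_of_nonneg_right (hpow (by lia)) (Nat.cast_nonneg _))
  · calc ((sqCells δ A' - sqCells δ A').card : ℝ) ≤ (1 / |a| + 3) * _ :=
          card_sqCells_sub_sqCells_le hδ (abs_pos.1 ha0)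
      _ ≤ l ^ 2 * (l ^ (9 * q + 22) * A'.card) := by gcongr
      _ = l ^ (9 * q + 24) * A'.card := by ring

lemma lt_max_coverNum (hδ : 0 < δ) (hδ1 : δ ≤ 1) (hs0 : 0 < s) (hs1 : s < 1) (hl : 1000 ≤ l)
    {q : ℕ} (hq : 1 ≤ s * q)
    (hδl : δ ^ ((1 - s) / 4) ≤ ((l ^ (9 * q + 24)) ^ ((16 * q + 123) * (10 * q)))⁻¹)
    (hA : IsFrostman δ s l A) (hA01 : (A : Set ℝ) ⊆ Set.Icc 0 1)
    (hsep : (A : Set ℝ).Pairwise fun x y => δ ≤ |x - y|) (hAne : A.Nonempty)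
    (hcard : A.card * δ ^ s ≤ l) (hG : G ⊆ A ×ˢ A) (hdense : (A.card : ℝ) ^ 2 ≤ l * G.card)
    {a b : ℝ} (ha : 1 ≤ l * |a|) (hb : 1 ≤ l * |b|) :
    l * A.card < max (coverNum δ ((fun p : ℝ × ℝ => p.1 + p.2) '' G) : ℝ)
      (coverNum δ ((fun p : ℝ × ℝ => a * p.1 ^ 2 + b * p.2 ^ 2) '' G) : ℝ) := by
  have hl1 : 1 ≤ l := by linarith
  by_contra! hmax
  have hδq : δ ≤ (l ^ (3 * q))⁻¹ :=
    calc δ ≤ δ ^ ((1 - s) / 4) := self_le_rpow_of_le_one hδ.le hδ1 (by linarith)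
      _ ≤ ((l ^ (9 * q + 24)) ^ ((16 * q + 123) * (10 * q)))⁻¹ := hδl
      _ ≤ (l ^ (3 * q))⁻¹ := by
        rw [← pow_mul]
        gcongr ?_⁻¹
        exact pow_le_pow_right₀ hl1 (Nat.mul_le_mul (by lia) (by nlinarith))
  obtain ⟨A', hA'⟩ := exists_hasSmallDifferences hδ hl hq hδq hA hA01 hsep hAne hcard hG hdense
    ha hb ((le_max_left _ _).trans hmax) ((le_max_right _ _).trans hmax)
  exact (hA'.inv_pow_lt_rpow hδ hδ1 hs0 hs1 (hl.trans (le_self_pow₀ hl1 (by lia))) hq).not_ge hδl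

end SumProduct

open Filter Topology

theorem covering_sum_product_jointly_general {s : ℝ} (hs0 : 0 < s) (hs1 : s < 1) :
    ∃ ε : ℝ, 0 < ε ∧ ∀ a b C D : ℝ, a ≠ 0 → b ≠ 0 → ∀ᶠ δ in 𝓝[>] 0, ∀ A : Finset ℝ,
      (A : Set ℝ) ⊆ Set.Icc 0 1 → (A : Set ℝ).Pairwise (fun x y => δ ≤ |x - y|) →
      A.card ≤ D * δ ^ (-s) → IsFrostman δ s C A → ∀ G ⊆ A ×ˢ A,
        δ ^ ε * (A.card : ℝ) ^ 2 ≤ G.card →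
        δ ^ (-ε) * A.card ≤ max (coverNum δ ((fun p : ℝ × ℝ => p.1 + p.2) '' G) : ℝ)
          (coverNum δ ((fun p : ℝ × ℝ => a * p.1 ^ 2 + b * p.2 ^ 2) '' G) : ℝ) := by
  obtain ⟨q, hq⟩ := exists_nat_ge (1 / s)
  rw [div_le_iff₀' hs0] at hq
  have hq0 : 0 < q := Nat.pos_of_ne_zero fun h => by norm_num [h] at hq
  set E := (9 * q + 24) * ((16 * q + 123) * (10 * q)) with hE
  have hE0 : (0 : ℝ) < E := Nat.cast_pos.2 (by positivity)
  have hε : 0 < (1 - s) / 4 / E := div_pos (by linarith) hE0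
  refine ⟨(1 - s) / 4 / E, hε, fun a b C D ha hb => ?_⟩
  have hlarge := (tendsto_rpow_neg_nhdsGT_zero (neg_lt_zero.2 hε)).eventually_ge_atTop
  filter_upwards [hlarge 1000, hlarge C, hlarge D, hlarge (1 / |a|), hlarge (1 / |b|),
    Ioc_mem_nhdsGT zero_lt_one] with δ hl hC hD hla hlb ⟨hδ, hδ1⟩ A hA01 hsep hcard hA G hG hdense
  rcases A.eq_empty_or_nonempty with rfl | hAne
  · simp
  have hinv : δ ^ (-((1 - s) / 4 / E)) * δ ^ ((1 - s) / 4 / E) = 1 := by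
    rw [← rpow_add hδ, neg_add_cancel, rpow_zero]
  refine (lt_max_coverNum hδ hδ1 hs0 hs1 hl hq ?_ (hA.mono_const hδ.le hC) hA01 hsep hAne ?_ hG ?_
    ((div_le_iff₀ (abs_pos.2 ha)).1 hla) ((div_le_iff₀ (abs_pos.2 hb)).1 hlb)).le
  · rw [← pow_mul, ← hE, ← rpow_natCast, ← rpow_mul hδ.le, ← rpow_neg hδ.le, neg_mul, neg_neg,
      div_mul_cancel₀ _ hE0.ne']
  · calc A.card * δ ^ s ≤ D * δ ^ (-s) * δ ^ s := by gcongr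
      _ = D := by rw [mul_assoc, ← rpow_add hδ, neg_add_cancel, rpow_zero, mul_one]
      _ ≤ _ := hD
  · calc (A.card : ℝ) ^ 2 = δ ^ (-((1 - s) / 4 / E)) * (δ ^ ((1 - s) / 4 / E) * A.card ^ 2) := by
          rw [← mul_assoc, hinv, one_mul]
      _ ≤ _ := by gcongr

/-- Theorem: for `0 < s < 1` there are `ε = ε(s) > 0` and `e = e(s) > 0` such that for all
nonzero `α, β` there is `K = K(α,β,s) > 0`, and for all `C ≥ 1` there is `δ₀ > 0`, such that
for all `0 < δ ≤ δ₀`, every δ-separated set `A ⊆ [0,1]` of cardinality `⌈δ^{-s}⌉` satisfying the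
non-concentration bound `#(A ∩ I) ≤ C l^s #A` for intervals of length `l ≥ δ`, and every
`G ⊆ A × A` with `#G ≥ δ^ε (#A)²`, satisfy
`E_δ(A +_G A) + E_δ({αx² + βy² : (x,y) ∈ G}) ≥ K C^{-e} δ^{-ε} #A`. -/
theorem covering_sum_product_jointly (s : ℝ) (hs0 : 0 < s) (hs1 : s < 1) :
    ∃ ε e : ℝ, 0 < ε ∧ 0 < e ∧
      ∀ (a b : ℝ), a ≠ 0 → b ≠ 0 →
        ∃ K : ℝ, 0 < K ∧
          ∀ C : ℝ, 1 ≤ C →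
            ∃ δ₀ : ℝ, 0 < δ₀ ∧
              ∀ δ : ℝ, 0 < δ → δ ≤ δ₀ →
                ∀ A : Finset ℝ, (↑A : Set ℝ) ⊆ Set.Icc 0 1 →
                  (∀ x ∈ A, ∀ y ∈ A, x ≠ y → δ ≤ |x - y|) →
                  A.card = ⌈δ ^ (-s)⌉₊ →
                  (∀ x l : ℝ, δ ≤ l →
                    ((A.filter (fun t => t ∈ Set.Icc x (x + l))).card : ℝ) ≤
                      C * l ^ s * (A.card : ℝ)) →
                  ∀ G : Finset (ℝ × ℝ), G ⊆ A ×ˢ A →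
                    δ ^ ε * (A.card : ℝ) ^ 2 ≤ (G.card : ℝ) →
                    K * C ^ (-e) * δ ^ (-ε) * (A.card : ℝ) ≤
                      (coverNum δ ((fun p : ℝ × ℝ => p.1 + p.2) '' (↑G : Set (ℝ × ℝ))) : ℝ) +
                        (coverNum δ
                          ((fun p : ℝ × ℝ => a * p.1 ^ 2 + b * p.2 ^ 2) ''
                            (↑G : Set (ℝ × ℝ))) : ℝ) := by
  obtain ⟨ε, hε, h⟩ := covering_sum_product_jointly_general hs0 hs1
  refine ⟨ε, 1, hε, one_pos, fun a b ha hb => ⟨1, one_pos, fun C hC => ?_⟩⟩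
  have hsmall := (h a b C 2 ha hb).and (Ioc_mem_nhdsGT zero_lt_one)
  obtain ⟨δ₀, hδ₀, hsub⟩ := mem_nhdsGT_iff_exists_Ioc_subset.1 hsmall
  refine ⟨δ₀, hδ₀, fun δ hδ hδδ₀ A hA01 hsep hcard hA G hG hdense => ?_⟩
  obtain ⟨hmax, -, hδ1⟩ := hsub ⟨hδ, hδδ₀⟩
  have hcard2 : (A.card : ℝ) ≤ 2 * δ ^ (-s) := by
    have := one_le_rpow_of_pos_of_le_one_of_nonpos hδ hδ1 (neg_nonpos.2 hs0.le)
    rw [hcard]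
    exact Nat.ceil_le_two_mul (by linarith)
  calc 1 * C ^ (-1 : ℝ) * δ ^ (-ε) * (A.card : ℝ) = C⁻¹ * (δ ^ (-ε) * A.card) := by
        rw [one_mul, rpow_neg_one, mul_assoc]
    _ ≤ δ ^ (-ε) * A.card := mul_le_of_le_one_left (by positivity) (inv_le_one_of_one_le₀ hC)
    _ ≤ max _ _ := hmax A hA01 (fun x hx y hy => hsep x hx y hy) hcard2 hA G hG hdense
    _ ≤ _ + _ := max_le_add_of_nonneg (Nat.cast_nonneg _) (Nat.cast_nonneg _)
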